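/- For every integer N ≥ 2, the modular polynomial Φ_N ∈ ℤ[X,Y] satisfies deg_X(Φ_N) = deg_Y(Φ_N) = ψ(N), where ψ(N) = N ∏_{p | N, p prime} (1 + 1/p) is the Dedekind psi function, and its logarithmic height h(Φ_N) (the logarithm of the maximum absolute value of its coefficients) satisfies the explicit bounds 6 ψ(N) ( log N − 2 λ_N − 0.0351 ) ≤ h(Φ_N) ≤ 6 ψ(N) ( log N − 2 λ_N + 9.5387 ), where λ_N = Σ_{p^n ∥ N} ((p^n − 1)/(p^{n−1}(p² − 1))) log p, the sum running over the exact prime powers p^n dividing N. -/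

import Mathlib

/-!
Degree and height of the modular polynomial `Φ_N ∈ ℤ[X,Y]`:
`deg_X Φ_N = deg_Y Φ_N = ψ(N)` (Dedekind psi), and the explicit bounds
`6 ψ(N)(log N - 2 λ_N - 0.0351) ≤ h(Φ_N) ≤ 6 ψ(N)(log N - 2 λ_N + 9.5387)`.

The modular polynomial is characterized as the irreducible polynomial, monic in
each variable, vanishing at `(j₁, j₂)` exactly when `j₁, j₂` are `j`-invariants
of elliptic curves related by a cyclic `N`-isogeny; analytically, `j₁ = j(γτ)`,
`j₂ = j(τ)` for some `τ ∈ ℍ` and some primitive integer matrix `γ` of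
determinant `N`.
-/

/-- The modular discriminant in the nome. -/
noncomputable def Δ (q : ℂ) : ℂ := q * ∏' n : ℕ, (1 - q ^ (n + 1)) ^ 24

/-- The normalized Eisenstein series of weight 4 in the nome. -/
noncomputable def E₄ (q : ℂ) : ℂ :=
  1 + 240 * ∑' n : ℕ, (ArithmeticFunction.sigma 3 (n + 1) : ℂ) * q ^ (n + 1)

/-- The modular `j`-invariant in the nome. -/
noncomputable def J (q : ℂ) : ℂ := E₄ q ^ 3 / Δ q

/-- The classical modular `j`-invariant, `j(τ) = J(e^{2πiτ})`. -/
noncomputable def jInv (τ : ℂ) : ℂ := J (Complex.exp (2 * Real.pi * Complex.I * τ))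

/-- Evaluation of a bivariate integer polynomial (variable `0` is `X`, variable `1` is `Y`). -/
noncomputable def evalBiv (P : MvPolynomial (Fin 2) ℤ) (x y : ℂ) : ℂ :=
  MvPolynomial.eval₂ (Int.castRingHom ℂ) ![x, y] P

/-- `P` is the modular polynomial `Φ_N`: irreducible, monic in each of the two
variables, and `P(x, y) = 0` iff `x = j(γτ)`, `y = j(τ)` for some `τ ∈ ℍ` and some
primitive integral matrix `γ = (a b; c d)` of determinant `N` (equivalently, `x, y`
are `j`-invariants of elliptic curves related by a cyclic `N`-isogeny). -/
def IsModularPolynomial (N : ℕ) (P : MvPolynomial (Fin 2) ℤ) : Prop :=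
  Irreducible P ∧
  (MvPolynomial.finSuccEquiv ℤ 1 P).Monic ∧
  (MvPolynomial.finSuccEquiv ℤ 1 (MvPolynomial.rename (⇑(Equiv.swap 0 1)) P)).Monic ∧
  ∀ x y : ℂ, evalBiv P x y = 0 ↔
    ∃ τ : ℂ, 0 < τ.im ∧ ∃ a b c d : ℤ,
      a * d - b * c = (N : ℤ) ∧
      Int.gcd (Int.gcd a b) (Int.gcd c d) = 1 ∧
      x = jInv (((a : ℂ) * τ + b) / ((c : ℂ) * τ + d)) ∧ y = jInv τ

/-- The logarithmic height of an integer polynomial: `log max |coeff|`. -/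
noncomputable def polyHeight (P : MvPolynomial (Fin 2) ℤ) : ℝ :=
  Real.log ((P.support.sup fun m => (MvPolynomial.coeff m P).natAbs : ℕ) : ℝ)

/-- The Dedekind psi function `ψ(N) = N ∏_{p ∣ N} (1 + 1/p)`. -/
def dedekindPsi (N : ℕ) : ℕ :=
  (N * ∏ p ∈ N.primeFactors, (p + 1)) / ∏ p ∈ N.primeFactors, p

/-- `λ_N = Σ_{pⁿ ∥ N} ((pⁿ - 1)/(p^{n-1}(p² - 1))) log p`. -/
noncomputable def lambdaN (N : ℕ) : ℝ :=
  ∑ p ∈ N.primeFactors,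
    (((p : ℝ) ^ (N.factorization p) - 1) /
        ((p : ℝ) ^ (N.factorization p - 1) * ((p : ℝ) ^ 2 - 1))) * Real.log p


namespace MP
open UpperHalfPlane MatrixGroups Polynomial
open scoped ModularForm
open scoped Real

/-- j-invariant on the upper half plane in terms of Mathlib objects. -/
noncomputable def jH (τ : ℍ) : ℂ := ModularForm.E₄ τ ^ 3 / ModularForm.discriminant τ

noncomputable def qq (τ : ℍ) : ℂ := Complex.exp (2 * Real.pi * Complex.I * (τ : ℂ))

lemma Δ_eq (τ : ℍ) : Δ (qq τ) = ModularForm.discriminant τ := by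
  rw [ModularForm.discriminant_eq_q_prod, Δ]
  have h1 : Function.Periodic.qParam 1 (τ : ℂ) = qq τ := by
    simp [qq, Function.Periodic.qParam]
  have h2 : ∀ n : ℕ, ModularForm.eta_q n (τ : ℂ) = qq τ ^ (n + 1) := by
    intro n; rw [ModularForm.eta_q_eq_pow]; rfl
  simp only [h1, h2]

lemma E₄_eq (τ : ℍ) : E₄ (qq τ) = ModularForm.E₄ τ := by
  rw [ModularForm.E₄, EisensteinSeries.q_expansion_bernoulli (by norm_num) (by decide), E₄]
  simp_rw [zpow_natCast]
  rw [tsum_pnat_eq_tsum_succ (f := fun n ↦ ((ArithmeticFunction.sigma 3 n : ℕ) : ℂ) *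
    Complex.exp (2 * π * Complex.I * τ) ^ n)]
  have : (_root_.bernoulli 4 : ℚ) = -1/30 := by
    simp [_root_.bernoulli, bernoulli'_four]; norm_num
  rw [this]
  simp only [qq]
  push_cast
  ring

lemma jInv_eq (τ : ℍ) : jInv (τ : ℂ) = jH τ := by
  rw [jInv, _root_.J, jH, ← Δ_eq, ← E₄_eq, qq]

lemma weight12_poly (n : ℕ) : ∀ (G : ModularForm 𝒮ℒ (12 * (n : ℤ))),
    ∃ p : ℂ[X], ∀ τ : ℍ, G τ / ModularForm.discriminant τ ^ n = p.eval (jH τ) := by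
  induction n with
  | zero =>
    intro G
    obtain ⟨c, hc⟩ := ModularFormClass.levelOne_weight_zero_const
      (ModularForm.mcast (by simp) G : ModularForm 𝒮ℒ 0)
    refine ⟨C c, fun τ => ?_⟩
    have := congrFun hc τ
    simp at this ⊢
    exact this
  | succ n ih =>
    intro G
    let E : ModularForm 𝒮ℒ (12 * ((n + 1 : ℕ) : ℤ)) :=
      ModularForm.mcast (by push_cast; ring) (ModularForm.E₄.pow (3 * (n + 1)))
    have hE : (qExpansion 1 E).coeff 0 = 1 := by
      have h0 : (qExpansion 1 ModularForm.E₄).coeff 0 = 1 :=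
        EisensteinSeries.E_qExpansion_coeff_zero (by norm_num) (by decide)
      simp only [E, ModularForm.coe_mcast]
      rw [ModularForm.qExpansion_pow one_pos one_mem_strictPeriods_SL]
      simp only [PowerSeries.coeff_zero_eq_constantCoeff, map_pow] at h0 ⊢
      rw [h0, one_pow]
    set c := (qExpansion 1 G).coeff 0
    have hc := (ModularForm.isCuspForm_iff_coeffZero_eq_zero _).mp
      (ModularForm.sub_smul_isCuspForm G E hE)
    let F := CuspForm.discriminantEquiv (ModularForm.toCuspForm _ hc)
    obtain ⟨p, hp⟩ := ih (ModularForm.mcast (by push_cast; ring) F)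
    refine ⟨C c * X ^ (n + 1) + p, fun τ => ?_⟩
    have hd := ModularForm.discriminant_ne_zero τ
    have h1 : F τ = (G τ - c * ModularForm.E₄ τ ^ (3 * (n + 1))) / ModularForm.discriminant τ := by
      simp only [F, CuspForm.discriminantEquiv_apply, ModularForm.toCuspForm_apply]
      have : (ModularForm.E₄.pow (3 * (n + 1))) τ = ModularForm.E₄ τ ^ (3 * (n + 1)) := by
        rw [ModularForm.coe_pow]; rfl
      simp [E, c, this]
    have h2 := hp τ
    simp only [ModularForm.coe_mcast] at h2
    rw [eval_add, ← h2, h1]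
    simp only [eval_mul, eval_C, eval_pow, eval_X, jH]
    rw [div_pow, pow_mul, pow_succ (ModularForm.discriminant τ)]
    field_simp
    ring

lemma slash_smul {k : ℤ} {f : ℍ → ℂ} (σ : SL(2, ℤ)) (hf : f ∣[k] σ = f) (τ : ℍ) :
    f (σ • τ) = denom σ τ ^ k * f τ := by
  have h := congrFun hf τ
  have h0 := denom_ne_zero σ τ
  have h1 := ModularForm.SL_slash_apply (k := k) f σ τ
  have h2 : f τ = f (σ • τ) * denom σ τ ^ (-k) := by
    rw [← h1]; exact h.symm
  rw [h2, zpow_neg]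
  field_simp

lemma E4_smul (σ : SL(2, ℤ)) (τ : ℍ) :
    ModularForm.E₄ (σ • τ) = denom σ τ ^ 4 * ModularForm.E₄ τ := by
  have h := slash_smul σ (ModularForm.E₄.slash_action_eq' _ ⟨σ, rfl⟩) τ
  exact_mod_cast h

lemma disc_smul (σ : SL(2, ℤ)) (τ : ℍ) :
    ModularForm.discriminant (σ • τ) = denom σ τ ^ 12 * ModularForm.discriminant τ := by
  have h := slash_smul σ (CuspForm.discriminant.slash_action_eq' _ ⟨σ, rfl⟩) τ
  exact_mod_cast h

lemma jH_smul (σ : SL(2, ℤ)) (τ : ℍ) : jH (σ • τ) = jH τ := by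
  have hd := ModularForm.discriminant_ne_zero τ
  have := denom_ne_zero σ τ
  rw [jH, jH, E4_smul, disc_smul]
  field_simp

end MP

namespace MP
open UpperHalfPlane MatrixGroups Polynomial Matrix
open scoped Real ModularForm

/-- Hermite normal form representatives of primitive matrices of determinant `N`,
`(d, b)` stands for `!![N/d, b; 0, d]`. -/
def R (N : ℕ) : Finset (ℕ × ℕ) :=
  (N.divisors ×ˢ Finset.range N).filter
    (fun p => p.2 < p.1 ∧ Nat.gcd p.2 (Nat.gcd p.1 (N / p.1)) = 1)

lemma mem_R {N : ℕ} (hN : 0 < N) {p : ℕ × ℕ} : p ∈ R N ↔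
    p.1 ∣ N ∧ p.2 < p.1 ∧ Nat.gcd p.2 (Nat.gcd p.1 (N / p.1)) = 1 := by
  simp only [R, Finset.mem_filter, Finset.mem_product, Nat.mem_divisors, Finset.mem_range]
  constructor
  · rintro ⟨⟨⟨h1, -⟩, -⟩, h3, h4⟩; exact ⟨h1, h3, h4⟩
  · rintro ⟨h1, h2, h3⟩
    exact ⟨⟨⟨h1, hN.ne'⟩, h2.trans_le (Nat.le_of_dvd hN h1)⟩, h2, h3⟩

def toMat (N : ℕ) (p : ℕ × ℕ) : Matrix (Fin 2) (Fin 2) ℤ := !![((N / p.1 : ℕ) : ℤ), p.2; 0, p.1]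

/-- underlying matrix -/
def mt (σ : SL(2, ℤ)) : Matrix (Fin 2) (Fin 2) ℤ := fun i j => σ i j

lemma mt_mul (σ τ : SL(2, ℤ)) : mt (σ * τ) = mt σ * mt τ :=
  Matrix.SpecialLinearGroup.coe_mul σ τ
lemma mt_one : mt 1 = 1 := Matrix.SpecialLinearGroup.coe_one
lemma mt_det (σ : SL(2, ℤ)) : (mt σ).det = 1 := σ.det_coe

def Prim (M : Matrix (Fin 2) (Fin 2) ℤ) : Prop := ∀ k : ℤ, (∀ i j, k ∣ M i j) → IsUnit k

lemma Prim.mul_right {M : Matrix (Fin 2) (Fin 2) ℤ} (h : Prim M) (σ : SL(2, ℤ)) :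
    Prim (M * mt σ) := by
  intro k hk
  apply h
  have : M = (M * mt σ) * mt (σ⁻¹) := by
    rw [Matrix.mul_assoc, ← mt_mul, mul_inv_cancel, mt_one, Matrix.mul_one]
  intro i j
  rw [this, Matrix.mul_apply]
  exact Finset.dvd_sum fun l _ => Dvd.dvd.mul_right (hk i l) _

lemma Prim.mul_left {M : Matrix (Fin 2) (Fin 2) ℤ} (σ : SL(2, ℤ))
    (h : Prim ((σ : Matrix (Fin 2) (Fin 2) ℤ) * M)) : Prim M := by
  intro k hk
  apply h
  intro i j
  rw [Matrix.mul_apply]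
  exact Finset.dvd_sum fun l _ => Dvd.dvd.mul_left (hk l j) _

lemma prim_toMat {N : ℕ} {p : ℕ × ℕ} :
    Prim (toMat N p) ↔ Nat.gcd p.2 (Nat.gcd p.1 (N / p.1)) = 1 := by
  constructor
  · intro h
    set g := Nat.gcd p.2 (Nat.gcd p.1 (N / p.1)) with hg
    have h1 : g ∣ p.2 := Nat.gcd_dvd_left _ _
    have h2 : g ∣ p.1 := (Nat.gcd_dvd_right _ _).trans (Nat.gcd_dvd_left _ _)
    have h3 : g ∣ N / p.1 := (Nat.gcd_dvd_right _ _).trans (Nat.gcd_dvd_right _ _)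
    have := h (g : ℤ) (by
      intro i j
      fin_cases i <;> fin_cases j <;> simp [toMat]
      · exact_mod_cast h3
      · exact_mod_cast h1
      · exact_mod_cast h2)
    simpa using Int.isUnit_iff_natAbs_eq.mp this
  · intro h k hk
    have h00 := hk 0 0
    have h01 := hk 0 1
    have h11 := hk 1 1
    simp [toMat] at h00 h01 h11
    rw [Int.isUnit_iff_natAbs_eq]
    have e1 := Int.natAbs_dvd_natAbs.mpr h01
    have e2 := Int.natAbs_dvd_natAbs.mpr h11
    have e3 : k.natAbs ∣ N / p.1 := by
      have : k ∣ ((N / p.1 : ℕ) : ℤ) := by simpa using h00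
      exact Int.natAbs_dvd_natAbs.mpr this
    simp at e1 e2
    exact Nat.dvd_one.mp (h ▸ Nat.dvd_gcd e1 (Nat.dvd_gcd e2 e3))

lemma det_toMat {N : ℕ} {p : ℕ × ℕ} (h : p.1 ∣ N) : (toMat N p).det = N := by
  simp only [toMat, det_fin_two_of]
  have := Nat.div_mul_cancel h
  rw [mul_zero, sub_zero]
  exact_mod_cast this

/-- Hermite normal form: existence. -/
lemma exists_rep {N : ℕ} (hN : 0 < N) (M : Matrix (Fin 2) (Fin 2) ℤ) (hd : M.det = N)
    (hM : Prim M) : ∃ p ∈ R N, ∃ σ : SL(2, ℤ), M = mt σ * toMat N p := by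
  rw [det_fin_two] at hd
  set A := M 0 0
  set B := M 0 1
  set C := M 1 0
  set D := M 1 1
  set a : ℕ := Int.gcd A C with ha
  have ha0 : 0 < a := by
    apply Int.gcd_pos_iff.mpr
    by_contra! h
    rw [h.1, h.2] at hd
    simp at hd; omega
  obtain ⟨A', hA'⟩ : (a : ℤ) ∣ A := Int.gcd_dvd_left _ _
  obtain ⟨C', hC'⟩ : (a : ℤ) ∣ C := Int.gcd_dvd_right _ _
  have haz : (a : ℤ) ≠ 0 := by exact_mod_cast ha0.ne'
  -- Bezout
  set u := Int.gcdA A C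
  set v := Int.gcdB A C
  have hbez : (a : ℤ) = A * u + C * v := Int.gcd_eq_gcd_ab A C
  have hb1 : A' * u + C' * v = 1 := by
    apply mul_left_cancel₀ haz
    rw [mul_one]; conv_rhs => rw [hbez, hA', hC']
    ring
  -- d
  set d : ℤ := A' * D - B * C' with hdd
  have had : (a : ℤ) * d = N := by rw [← hd, hA', hC', hdd]; ring
  have hdpos : 0 < d := by
    have : (0 : ℤ) < a * d := by rw [had]; exact_mod_cast hN
    exact pos_of_mul_pos_right this (by positivity)
  set b0 : ℤ := u * B + v * D with hb0
  set b : ℤ := b0 % d with hb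
  set t : ℤ := b0 / d with ht
  have hbt : b0 = b + d * t := by rw [hb, ht, Int.emod_add_mul_ediv]
  have hb_nonneg : 0 ≤ b := Int.emod_nonneg _ hdpos.ne'
  have hb_lt : b < d := Int.emod_lt_of_pos _ hdpos
  lift d to ℕ using hdpos.le with dn hdn
  lift b to ℕ using hb_nonneg with bn hbn
  have hNad : N = a * dn := by exact_mod_cast had.symm
  have hdn0 : 0 < dn := by exact_mod_cast hdpos
  have hNd : N / dn = a := by rw [hNad, Nat.mul_div_cancel _ hdn0]
  let σ : SL(2, ℤ) := ⟨!![A', -v + t * A'; C', u + t * C'], by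
    rw [det_fin_two_of]; linear_combination hb1⟩
  have key : M = mt σ * toMat N (dn, bn) := by
    have e00 : M 0 0 = A' * a := by linarith [hA', mul_comm A' (a : ℤ)]
    have e10 : M 1 0 = C' * a := by linarith [hC', mul_comm C' (a : ℤ)]
    have e01 : M 0 1 = A' * bn + (-v + t * A') * dn := by
      have : A' * bn + (-v + t * A') * dn = A' * b0 - v * dn := by rw [hbt]; ring
      rw [this, hb0, hdd]; linear_combination (-B) * hb1
    have e11 : M 1 1 = C' * bn + (u + t * C') * dn := by
      have : C' * bn + (u + t * C') * dn = C' * b0 + u * dn := by rw [hbt]; ring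
      rw [this, hb0, hdd]; linear_combination (-D) * hb1
    ext i j
    fin_cases i <;> fin_cases j
    · simpa [mt, σ, toMat, Matrix.mul_apply, ← hNd] using e00
    · simpa [mt, σ, toMat, Matrix.mul_apply] using e01
    · simpa [mt, σ, toMat, Matrix.mul_apply, ← hNd] using e10
    · simpa [mt, σ, toMat, Matrix.mul_apply] using e11
  refine ⟨(dn, bn), ?_, σ, key⟩
  rw [mem_R hN]
  refine ⟨⟨a, by rw [hNad, mul_comm]⟩, by exact_mod_cast hb_lt, ?_⟩
  have : Prim (toMat N (dn, bn)) := Prim.mul_left σ (key ▸ hM)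
  exact prim_toMat.mp this

/-- Hermite normal form: uniqueness. -/
lemma unique_rep {N : ℕ} (hN : 0 < N) {p p' : ℕ × ℕ} (hp : p ∈ R N) (hp' : p' ∈ R N)
    (σ : SL(2, ℤ)) (h : mt σ * toMat N p = toMat N p') : p = p' := by
  obtain ⟨d, b⟩ := p
  obtain ⟨d', b'⟩ := p'
  rw [mem_R hN] at hp hp'
  obtain ⟨h1, h2, -⟩ := hp
  obtain ⟨h1', h2', -⟩ := hp'
  simp only at h1 h2 h1' h2'
  have ha : 0 < N / d := Nat.div_pos (Nat.le_of_dvd hN h1) (by omega)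
  have ha' : 0 < N / d' := Nat.div_pos (Nat.le_of_dvd hN h1') (by omega)
  have hdet := mt_det σ
  rw [det_fin_two] at hdet
  have e00 := congrFun (congrFun h 0) 0
  have e01 := congrFun (congrFun h 0) 1
  have e10 := congrFun (congrFun h 1) 0
  have e11 := congrFun (congrFun h 1) 1
  simp only [toMat, mul_apply, Fin.sum_univ_two, of_apply, cons_val', cons_val_zero, cons_val_one,
    cons_val_fin_one, mul_zero, add_zero] at e00 e01 e10 e11
  set s00 := mt σ 0 0
  set s01 := mt σ 0 1
  set s10 := mt σ 1 0
  set s11 := mt σ 1 1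
  have haz : (0 : ℤ) < (N / d : ℕ) := by exact_mod_cast ha
  have haz' : (0 : ℤ) < (N / d' : ℕ) := by exact_mod_cast ha'
  have s10z : s10 = 0 := by
    rcases mul_eq_zero.mp e10 with h | h
    · exact h
    · omega
  rw [s10z] at hdet e11
  have hs00 : 0 < s00 := by
    by_contra hneg
    have : s00 * (N / d : ℕ) ≤ 0 := mul_nonpos_of_nonpos_of_nonneg (by omega) haz.le
    omega
  have hs : s00 = 1 ∧ s11 = 1 := by
    have : s00 * s11 = 1 := by linarith
    rcases Int.mul_eq_one_iff_eq_one_or_neg_one.mp this with h | h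
    · exact h
    · omega
  rw [hs.1] at e01
  rw [hs.2] at e11
  have hdd : d = d' := by
    have : (d : ℤ) = d' := by linarith
    exact_mod_cast this
  subst hdd
  have : s01 = 0 := by
    have hb : s01 * (d : ℤ) = b' - b := by linarith
    have hdpos : (0 : ℤ) < d := by omega
    by_contra hne
    rcases lt_or_gt_of_ne hne with h | h
    · have : s01 * (d : ℤ) ≤ -1 * d := mul_le_mul_of_nonneg_right (by omega) hdpos.le
      omega
    · have : 1 * (d : ℤ) ≤ s01 * d := mul_le_mul_of_nonneg_right (by omega) hdpos.le
      omega
  rw [this] at e01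
  have : b = b' := by
    have : (b : ℤ) = b' := by linarith
    exact_mod_cast this
  rw [this]

/-- Right multiplication by `σ` permutes the representatives. -/
lemma exists_perm {N : ℕ} (hN : 0 < N) (σ : SL(2, ℤ)) :
    ∃ f : ℕ × ℕ → ℕ × ℕ, (∀ p ∈ R N, f p ∈ R N ∧ ∃ σ' : SL(2, ℤ),
      toMat N p * mt σ =
        mt σ' * toMat N (f p)) ∧ Set.InjOn f (R N) ∧
        (R N).image f = R N := by
  have h : ∀ p, ∃ p', p ∈ R N → p' ∈ R N ∧ ∃ σ' : SL(2, ℤ),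
      toMat N p * mt σ =
        mt σ' * toMat N p' := by
    intro p
    by_cases hp : p ∈ R N
    · have hp1 := (mem_R hN).mp hp
      obtain ⟨p', hp', h⟩ := exists_rep hN (toMat N p * mt σ)
        (by rw [det_mul, det_toMat hp1.1, mt_det, mul_one]) ((prim_toMat.mpr hp1.2.2).mul_right σ)
      exact ⟨p', fun _ => ⟨hp', h⟩⟩
    · exact ⟨p, fun h => absurd h hp⟩
  choose f hf using h
  have hinj : Set.InjOn f (R N) := by
    intro p hp q hq hpq
    obtain ⟨h1, s, hs⟩ := hf p hp
    obtain ⟨h2, t, ht⟩ := hf q hq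
    apply unique_rep hN hp hq (t * s⁻¹)
    have e1 : toMat N (f p) = mt (s⁻¹) *
        (toMat N p * mt σ) := by
      rw [hs, ← Matrix.mul_assoc, ← mt_mul, inv_mul_cancel, mt_one, Matrix.one_mul]
    have e2 : toMat N q = (toMat N q * mt σ) *
        mt (σ⁻¹) := by
      rw [Matrix.mul_assoc, ← mt_mul, mul_inv_cancel, mt_one, Matrix.mul_one]
    rw [e2, ht, ← hpq, e1, mt_mul]
    simp only [Matrix.mul_assoc]
    rw [← mt_mul σ, mul_inv_cancel, mt_one, Matrix.mul_one]
  refine ⟨f, hf, hinj, ?_⟩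
  apply Finset.eq_of_subset_of_card_le
  · intro x hx
    obtain ⟨p, hp, rfl⟩ := Finset.mem_image.mp hx
    exact (hf p hp).1
  · rw [Finset.card_image_of_injOn hinj]

end MP

namespace MP
open UpperHalfPlane MatrixGroups Polynomial Matrix
open scoped Real ModularForm

/-- The transformed point `(aτ+b)/d`. -/
noncomputable def pt (N : ℕ) (p : ℕ × ℕ) (τ : ℍ) : ℍ :=
  ofComplex ((((N / p.1 : ℕ) : ℂ) * τ + p.2) / p.1)

lemma R_pos {N : ℕ} (hN : 0 < N) {p : ℕ × ℕ} (hp : p ∈ R N) : 0 < p.1 ∧ 0 < N / p.1 := by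
  obtain ⟨h1, h2, h3⟩ := (mem_R hN).mp hp
  exact ⟨by omega, Nat.div_pos (Nat.le_of_dvd hN h1) (by omega)⟩

lemma im_pt_aux {a b d : ℕ} (z : ℂ) :
    ((((a : ℕ) : ℂ) * z + b) / d).im = (a : ℝ) / d * z.im := by
  rw [Complex.div_natCast_im]
  simp
  ring

lemma im_pt_pos {N : ℕ} (hN : 0 < N) {p : ℕ × ℕ} (hp : p ∈ R N) {z : ℂ} (hz : 0 < z.im) :
    0 < ((((N / p.1 : ℕ) : ℂ) * z + p.2) / p.1).im := by
  rw [im_pt_aux]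
  have := R_pos hN hp
  have h1 : (0 : ℝ) < p.1 := by exact_mod_cast this.1
  have h2 : (0 : ℝ) < (N / p.1 : ℕ) := by exact_mod_cast this.2
  positivity

lemma coe_pt {N : ℕ} (hN : 0 < N) {p : ℕ × ℕ} (hp : p ∈ R N) (τ : ℍ) :
    (pt N p τ : ℂ) = (((N / p.1 : ℕ) : ℂ) * τ + p.2) / p.1 := by
  rw [pt, ofComplex_apply_of_im_pos (im_pt_pos hN hp τ.2)]

lemma im_pt {N : ℕ} (hN : 0 < N) {p : ℕ × ℕ} (hp : p ∈ R N) (τ : ℍ) :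
    (pt N p τ).im = ((N / p.1 : ℕ) : ℝ) / p.1 * τ.im := by
  rw [← coe_im, coe_pt hN hp, im_pt_aux, coe_im]

lemma coe_smul_mt (σ : SL(2, ℤ)) (τ : ℍ) :
    ((σ • τ : ℍ) : ℂ) = ((mt σ 0 0 : ℂ) * τ + mt σ 0 1) / ((mt σ 1 0 : ℂ) * τ + mt σ 1 1) := by
  rw [coe_specialLinearGroup_apply]; rfl

lemma denom_mt (σ : SL(2, ℤ)) (τ : ℍ) :
    denom σ τ = (mt σ 1 0 : ℂ) * τ + mt σ 1 1 := by
  rw [ModularGroup.denom_apply]; rfl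

lemma pt_trans {N : ℕ} (hN : 0 < N) {p p' : ℕ × ℕ} (hp : p ∈ R N) (hp' : p' ∈ R N)
    {σ σ' : SL(2, ℤ)} (h : toMat N p * mt σ = mt σ' * toMat N p') (τ : ℍ) :
    pt N p (σ • τ) = σ' • pt N p' τ ∧ (p.1 : ℂ) * denom σ τ = denom σ' (pt N p' τ) * p'.1 := by
  have h1 := R_pos hN hp
  have h2 := R_pos hN hp'
  have d1 : (p.1 : ℂ) ≠ 0 := by exact_mod_cast h1.1.ne'
  have d2 : (p'.1 : ℂ) ≠ 0 := by exact_mod_cast h2.1.ne'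
  have n1 := denom_ne_zero σ τ
  have n2 := denom_ne_zero σ' (pt N p' τ)
  rw [denom_mt] at n1 n2
  rw [coe_pt hN hp'] at n2
  have e00 := congrArg (Int.cast (R := ℂ)) (congrFun (congrFun h 0) 0)
  have e01 := congrArg (Int.cast (R := ℂ)) (congrFun (congrFun h 0) 1)
  have e10 := congrArg (Int.cast (R := ℂ)) (congrFun (congrFun h 1) 0)
  have e11 := congrArg (Int.cast (R := ℂ)) (congrFun (congrFun h 1) 1)
  simp only [toMat, mul_apply, Fin.sum_univ_two, of_apply, cons_val', cons_val_zero, cons_val_one,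
    cons_val_fin_one, mul_zero, add_zero, zero_mul, zero_add, Int.cast_add, Int.cast_mul,
    Int.cast_natCast] at e00 e01 e10 e11
  have hden : (p.1 : ℂ) * denom σ τ = denom σ' (pt N p' τ) * p'.1 := by
    rw [denom_mt, denom_mt, coe_pt hN hp']
    field_simp
    linear_combination (τ : ℂ) * e10 + e11
  refine ⟨?_, hden⟩
  apply UpperHalfPlane.ext
  rw [denom_mt, denom_mt, coe_pt hN hp'] at hden
  rw [coe_pt hN hp, coe_smul_mt, coe_smul_mt, coe_pt hN hp']
  rw [mul_div_assoc', div_add' _ _ _ n1, div_div, mul_comm _ (p.1 : ℂ), hden, div_eq_div_iff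
    (mul_ne_zero n2 d2) n2]
  have : ((mt σ' 0 0 : ℂ) * ((((N / p'.1 : ℕ) : ℂ) * τ + p'.2) / p'.1) + mt σ' 0 1) * p'.1
     = ((N / p.1 : ℕ) : ℂ) * ((mt σ 0 0 : ℂ) * τ + mt σ 0 1) + p.2 * ((mt σ 1 0 : ℂ) * τ + mt σ 1 1) := by
    field_simp
    linear_combination -(τ : ℂ) * e00 - e01
  rw [← this]; ring

lemma jH_pt_smul_perm {N : ℕ} (hN : 0 < N) {α : Type*} [CommMonoid α] (u : ℕ → ℍ → α)
    (σ : SL(2, ℤ)) (τ : ℍ)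
    (hu : ∀ p ∈ R N, ∀ p' ∈ R N, ∀ σ' : SL(2, ℤ), pt N p (σ • τ) = σ' • pt N p' τ →
      (p.1 : ℂ) * denom σ τ = denom σ' (pt N p' τ) * p'.1 →
      u p.1 (σ' • pt N p' τ) = u p'.1 (pt N p' τ)) :
    ∏ p ∈ R N, u p.1 (pt N p (σ • τ)) = ∏ p ∈ R N, u p.1 (pt N p τ) := by
  obtain ⟨f, hf, hinj, him⟩ := exists_perm hN σ
  conv_rhs => rw [← him]
  rw [Finset.prod_image hinj]
  apply Finset.prod_congr rfl
  intro p hp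
  obtain ⟨h1, σ', h2⟩ := hf p hp
  obtain ⟨h3, h4⟩ := pt_trans hN hp h1 h2 τ
  rw [← hu p hp _ h1 σ' h3 h4, h3]

noncomputable def nmFun (N : ℕ) (F : ℍ → ℂ) (τ : ℍ) : ℂ :=
  ∏ p ∈ R N, F (pt N p τ) / (p.1 : ℂ) ^ 12

lemma nmFun_smul {N : ℕ} (hN : 0 < N) (F : ModularForm 𝒮ℒ 12) (σ : SL(2, ℤ)) (τ : ℍ) :
    nmFun N F (σ • τ) = denom σ τ ^ (12 * (R N).card) * nmFun N F τ := by
  have hd := denom_ne_zero σ τ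
  obtain ⟨f, hf, hinj, him⟩ := exists_perm hN σ
  have e : nmFun N F τ = ∏ p ∈ R N, F (pt N (f p) τ) / ((f p).1 : ℂ) ^ 12 := by
    rw [nmFun]
    conv_lhs => rw [← him]
    rw [Finset.prod_image hinj]
  rw [e, pow_mul, ← Finset.prod_const, ← Finset.prod_mul_distrib, nmFun]
  apply Finset.prod_congr rfl
  intro p hp
  obtain ⟨h1, σ', h2⟩ := hf p hp
  obtain ⟨h3, h4⟩ := pt_trans hN hp h1 h2 τ
  have hF := slash_smul σ' (F.slash_action_eq' _ ⟨σ', rfl⟩) (pt N (f p) τ)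
  have d1 : (p.1 : ℂ) ≠ 0 := by exact_mod_cast (R_pos hN hp).1.ne'
  have d2 : ((f p).1 : ℂ) ≠ 0 := by exact_mod_cast (R_pos hN h1).1.ne'
  have h5 : denom σ' (pt N (f p) τ) = (p.1 : ℂ) * denom σ τ / (f p).1 := by
    rw [h4]; field_simp
  have hF' : F (σ' • pt N (f p) τ) = denom σ' (pt N (f p) τ) ^ 12 * F (pt N (f p) τ) := by
    exact_mod_cast hF
  rw [h3, hF', h5]
  field_simp

lemma nmFun_holo {N : ℕ} (hN : 0 < N) (F : ModularForm 𝒮ℒ 12) :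
    DifferentiableOn ℂ (nmFun N F ∘ ofComplex) {z | 0 < z.im} := by
  have hF := UpperHalfPlane.mdifferentiable_iff.mp F.holo'
  have : ∀ z ∈ {z : ℂ | 0 < z.im}, (nmFun N F ∘ ofComplex) z =
      ∏ p ∈ R N, (F ∘ ofComplex) ((((N / p.1 : ℕ) : ℂ) * z + p.2) / p.1) / (p.1 : ℂ) ^ 12 := by
    intro z hz
    simp only [Function.comp_apply, nmFun, pt]
    rw [ofComplex_apply_of_im_pos hz]
  refine DifferentiableOn.congr ?_ this
  apply DifferentiableOn.fun_finsetProd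
  intro p hp
  apply DifferentiableOn.div_const
  apply DifferentiableOn.comp hF (t := {z : ℂ | 0 < z.im})
  · fun_prop
  · intro z hz
    exact im_pt_pos hN hp hz

lemma tendsto_pt {N : ℕ} (hN : 0 < N) {p : ℕ × ℕ} (hp : p ∈ R N) :
    Filter.Tendsto (pt N p) atImInfty atImInfty := by
  rw [atImInfty, Filter.tendsto_comap_iff]
  have : (UpperHalfPlane.im ∘ pt N p) = fun τ => ((N / p.1 : ℕ) : ℝ) / p.1 * τ.im := by
    ext τ; exact im_pt hN hp τ
  rw [this]
  have := R_pos hN hp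
  have h1 : (0 : ℝ) < p.1 := by exact_mod_cast this.1
  have h2 : (0 : ℝ) < (N / p.1 : ℕ) := by exact_mod_cast this.2
  exact Filter.Tendsto.const_mul_atTop (by positivity) Filter.tendsto_comap

lemma nmFun_bdd {N : ℕ} (hN : 0 < N) (F : ModularForm 𝒮ℒ 12) :
    IsBoundedAtImInfty (nmFun N F) := by
  have hF : IsBoundedAtImInfty F := ModularFormClass.bdd_at_infty F
  have : (nmFun N F) = ∏ p ∈ R N, fun τ => F (pt N p τ) / (p.1 : ℂ) ^ 12 := by
    ext τ; simp [nmFun]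
  rw [this]
  refine Finset.prod_induction _ (fun f : ℍ → ℂ => IsBoundedAtImInfty f) ?_ ?_ ?_
  · intro a b ha hb; exact ha.mul hb
  · exact Filter.const_boundedAtFilter _ _
  · intro p hp
    have h1 : (fun τ => F (pt N p τ)) =O[atImInfty] (1 : ℍ → ℝ) :=
      Asymptotics.IsBigO.comp_tendsto hF (tendsto_pt hN hp)
    have := h1.const_mul_left (((p.1 : ℂ) ^ 12)⁻¹)
    refine Asymptotics.IsBigO.congr_left this ?_
    intro τ; field_simp

noncomputable def normForm {N : ℕ} (hN : 0 < N) (F : ModularForm 𝒮ℒ 12) :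
    ModularForm 𝒮ℒ (12 * ((R N).card : ℤ)) := by
  have hs : ∀ γ : SL(2, ℤ), nmFun N F ∣[12 * ((R N).card : ℤ)] γ = nmFun N F := by
    intro γ
    ext τ
    have hd := denom_ne_zero γ τ
    rw [ModularForm.SL_slash_apply, nmFun_smul hN, _root_.zpow_neg]
    have : (denom γ τ) ^ (12 * ((R N).card : ℤ)) = denom γ τ ^ (12 * (R N).card) := by
      norm_cast
    rw [this]
    field_simp
  exact
  { toFun := nmFun N F
    slash_action_eq' := by
      rintro A ⟨γ, rfl⟩
      exact hs γ
    holo' := UpperHalfPlane.mdifferentiable_iff.mpr (nmFun_holo hN F)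
    bdd_at_cusps' := by
      intro c hc
      rw [Subgroup.IsArithmetic.isCusp_iff_isCusp_SL2Z] at hc
      rw [OnePoint.isBoundedAt_iff_forall_SL2Z hc]
      intro γ _
      rw [hs]
      exact nmFun_bdd hN F }

lemma normForm_apply {N : ℕ} (hN : 0 < N) (F : ModularForm 𝒮ℒ 12) (τ : ℍ) :
    normForm hN F τ = ∏ p ∈ R N, F (pt N p τ) / (p.1 : ℂ) ^ 12 := rfl

noncomputable def ΔM : ModularForm 𝒮ℒ 12 := CuspForm.toModularFormₗ CuspForm.discriminant
lemma ΔM_apply (τ : ℍ) : ΔM τ = ModularForm.discriminant τ := rfl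

noncomputable def Fx (x : ℂ) : ModularForm 𝒮ℒ 12 :=
  x • ΔM - ModularForm.mcast (by norm_num) (ModularForm.E₄.pow 3)

lemma Fx_apply (x : ℂ) (τ : ℍ) : Fx x τ = x * ModularForm.discriminant τ - ModularForm.E₄ τ ^ 3 := by
  have : (ModularForm.E₄.pow 3) τ = ModularForm.E₄ τ ^ 3 := by
        rw [ModularForm.coe_pow]; rfl
  simp [Fx, this, ΔM_apply]

end MP

namespace MP
open Finset

/-- number of representatives with given `d` -/
def nn (N d : ℕ) : ℕ := d / Nat.gcd d (N / d) * Nat.totient (Nat.gcd d (N / d))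

lemma card_filter_coprime (g k : ℕ) :
    #{b ∈ range (g * k) | Nat.gcd b g = 1} = k * Nat.totient g := by
  induction k with
  | zero => simp
  | succ k ih =>
    have h1 : range (g * (k + 1)) = range (g * k) ∪ Ico (g * k) (g * k + g) := by
      ext x; simp only [mem_range, mem_union, mem_Ico, mul_add, mul_one]; omega
    have hd : Disjoint (range (g * k)) (Ico (g * k) (g * k + g)) := by
      rw [disjoint_left]; intro x; simp only [mem_range, mem_Ico]; omega
    rw [h1, filter_union, card_union_of_disjoint (disjoint_filter_filter hd), ih, add_mul, one_mul]
    congr 1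
    rw [← Nat.filter_coprime_Ico_eq_totient g (g * k)]
    congr 1
    ext x
    simp only [mem_filter, Nat.Coprime, Nat.gcd_comm]

lemma card_fiber {N d : ℕ} :
    #{b ∈ range d | Nat.gcd b (Nat.gcd d (N / d)) = 1} = nn N d := by
  have := card_filter_coprime (Nat.gcd d (N / d)) (d / Nat.gcd d (N / d))
  rw [Nat.mul_div_cancel' (Nat.gcd_dvd_left _ _)] at this
  rw [this, nn]

lemma sum_R {N : ℕ} (hN : 0 < N) (f : ℕ → ℝ) :
    ∑ p ∈ R N, f p.1 = ∑ d ∈ N.divisors, (nn N d : ℝ) * f d := by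
  rw [← sum_fiberwise_of_maps_to (s := R N) (t := N.divisors) (g := Prod.fst)]
  · apply sum_congr rfl
    intro d hd
    have hdN := Nat.mem_divisors.mp hd
    have : ∀ p ∈ (R N).filter (fun p => p.1 = d), f p.1 = f d := by
      intro p hp; rw [(mem_filter.mp hp).2]
    rw [sum_congr rfl this, sum_const, nsmul_eq_mul]
    congr 2
    rw [← card_fiber]
    apply card_bij (fun p _ => p.2)
    · rintro ⟨d', b⟩ hp
      simp only [mem_filter] at hp
      obtain ⟨hp, rfl⟩ := hp
      have := (mem_R hN).mp hp
      simp only [mem_filter, mem_range]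
      exact this.2
    · rintro ⟨d1, b⟩ hp ⟨d2, b2⟩ hp2 h
      simp only [mem_filter] at hp hp2 h
      rw [hp.2, hp2.2, h]
    · intro b hb
      simp only [mem_filter, mem_range] at hb
      refine ⟨(d, b), ?_, rfl⟩
      simp only [mem_filter, and_true]
      exact (mem_R hN).mpr ⟨hdN.1, hb⟩
  · intro p hp
    exact Nat.mem_divisors.mpr ⟨((mem_R hN).mp hp).1, hN.ne'⟩

lemma nn_symm {N d : ℕ} (hN : 0 < N) (hd : d ∣ N) :
    (nn N (N / d) : ℝ) = nn N d * (((N / d : ℕ) : ℝ) / d) := by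
  obtain ⟨a, rfl⟩ := hd
  have hd0 : 0 < d := Nat.pos_of_mul_pos_right hN
  have ha0 : 0 < a := Nat.pos_of_mul_pos_left hN
  have e1 : d * a / d = a := Nat.mul_div_cancel_left _ hd0
  have e2 : d * a / a = d := Nat.mul_div_cancel _ ha0
  simp only [nn, e1, e2]
  rw [Nat.gcd_comm a d]
  set g := Nat.gcd d a
  have hg : 0 < g := Nat.gcd_pos_of_pos_left _ hd0
  have h1 : ((a / g : ℕ) : ℝ) = a / g := Nat.cast_div (Nat.gcd_dvd_right _ _) (by positivity)
  have h2 : ((d / g : ℕ) : ℝ) = d / g := Nat.cast_div (Nat.gcd_dvd_left _ _) (by positivity)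
  push_cast
  rw [h1, h2]
  field_simp

lemma sum_div_R {N : ℕ} (hN : 0 < N) :
    ∑ p ∈ R N, ((N / p.1 : ℕ) : ℝ) / p.1 = (R N).card := by
  rw [sum_R hN (fun d => ((N / d : ℕ) : ℝ) / d)]
  have h2 := sum_R hN (fun _ => (1 : ℝ))
  simp only [sum_const, nsmul_eq_mul, mul_one] at h2
  rw [h2, ← Nat.sum_div_divisors N (fun d => (nn N d : ℝ))]
  apply sum_congr rfl
  intro d hd
  exact (nn_symm hN (Nat.mem_divisors.mp hd).1).symm

noncomputable def SS (N : ℕ) : ℝ := ∑ d ∈ N.divisors, (nn N d : ℝ)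
noncomputable def LL (N : ℕ) : ℝ := ∑ d ∈ N.divisors, (nn N d : ℝ) * Real.log d

lemma nn_mul {M N d e : ℕ} (h : M.Coprime N) (hd : d ∣ M) (he : e ∣ N) :
    nn (M * N) (d * e) = nn M d * nn N e := by
  have h1 : M * N / (d * e) = (M / d) * (N / e) := Nat.mul_div_mul_comm hd he
  have hMd : M / d ∣ M := Nat.div_dvd_of_dvd hd
  have hNe : N / e ∣ N := Nat.div_dvd_of_dvd he
  have h2 : Nat.gcd (d * e) (M / d * (N / e)) = Nat.gcd d (M / d) * Nat.gcd e (N / e) := by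
    have c1 : (M / d).Coprime (N / e) := Nat.Coprime.of_dvd hMd hNe h
    rw [Nat.Coprime.gcd_mul _ c1]
    rw [Nat.Coprime.gcd_mul_right_cancel _ (Nat.Coprime.of_dvd he hMd h.symm)]
    rw [Nat.Coprime.gcd_mul_left_cancel _ (Nat.Coprime.of_dvd hd hNe h)]
  have c2 : (Nat.gcd d (M / d)).Coprime (Nat.gcd e (N / e)) :=
    Nat.Coprime.of_dvd ((Nat.gcd_dvd_left _ _).trans hd) ((Nat.gcd_dvd_left _ _).trans he) h
  simp only [nn]
  rw [h1, h2, Nat.totient_mul c2, Nat.mul_div_mul_comm (Nat.gcd_dvd_left _ _) (Nat.gcd_dvd_left _ _)]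
  ring

lemma sum_divisors_coprime {M N : ℕ} (h : M.Coprime N) (f : ℕ → ℝ) :
    ∑ d ∈ (M * N).divisors, f d = ∑ d ∈ M.divisors, ∑ e ∈ N.divisors, f (d * e) := by
  rw [Nat.divisors_mul, ← sum_product', Finset.mul_def, sum_image]
  intro x hx y hy hxy
  have := h.mul_injOn_divisors (by simpa using hx) (by simpa using hy) hxy
  exact this

lemma SS_mul {M N : ℕ} (h : M.Coprime N) : SS (M * N) = SS M * SS N := by
  rw [SS, sum_divisors_coprime h, SS, SS, sum_mul_sum]
  apply sum_congr rfl; intro d hd; apply sum_congr rfl; intro e he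
  rw [nn_mul h (Nat.mem_divisors.mp hd).1 (Nat.mem_divisors.mp he).1]; push_cast; rfl

lemma LL_mul {M N : ℕ} (h : M.Coprime N) : LL (M * N) = LL M * SS N + SS M * LL N := by
  rw [LL, sum_divisors_coprime h, SS, SS, LL, LL, sum_mul_sum, sum_mul_sum, ← sum_add_distrib]
  apply sum_congr rfl; intro d hd; rw [← sum_add_distrib]; apply sum_congr rfl; intro e he
  have h1 := Nat.mem_divisors.mp hd
  have h2 := Nat.mem_divisors.mp he
  have d0 : (d : ℝ) ≠ 0 := by exact_mod_cast (Nat.pos_of_dvd_of_pos h1.1 (Nat.pos_of_ne_zero h1.2)).ne'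
  have e0 : (e : ℝ) ≠ 0 := by exact_mod_cast (Nat.pos_of_dvd_of_pos h2.1 (Nat.pos_of_ne_zero h2.2)).ne'
  rw [nn_mul h h1.1 h2.1]; push_cast; rw [Real.log_mul d0 e0]; ring

lemma nn_prime_pow {p e i : ℕ} (hp : p.Prime) (hi : i ≤ e) :
    (nn (p ^ e) (p ^ i) : ℝ) = if i = 0 then 1 else if i = e then (p : ℝ) ^ e
      else (p : ℝ) ^ i - (p : ℝ) ^ (i - 1) := by
  have h1 : p ^ e / p ^ i = p ^ (e - i) := Nat.pow_div hi hp.pos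
  split_ifs with h h'
  · subst h; simp [nn]
  · subst h'; simp [nn, Nat.div_self (pow_pos hp.pos i)]
  · rw [nn, h1]
    obtain ⟨k, hk, hk0, hki⟩ : ∃ k, Nat.gcd (p ^ i) (p ^ (e - i)) = p ^ k ∧ 0 < k ∧ k ≤ i := by
      rcases le_total i (e - i) with hle | hle
      · exact ⟨i, Nat.gcd_eq_left (pow_dvd_pow p hle), by omega, le_rfl⟩
      · exact ⟨e - i, Nat.gcd_eq_right (pow_dvd_pow p hle), by omega, hle⟩
    rw [hk, Nat.totient_prime_pow hp hk0, Nat.pow_div hki hp.pos]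
    have e1 : p ^ (i - k) * (p ^ (k - 1) * (p - 1)) = p ^ (i - 1) * (p - 1) := by
      rw [← mul_assoc, ← pow_add]; congr 2; omega
    rw [e1]
    push_cast [Nat.cast_sub hp.one_le]
    have : i = (i - 1) + 1 := by omega
    conv_rhs => rw [this, pow_succ]
    simp only [Nat.add_sub_cancel]
    ring

lemma sum_prime_pow {p e : ℕ} (hp : p.Prime) (f : ℕ → ℝ) :
    ∑ d ∈ (p ^ (e + 1)).divisors, (nn (p ^ (e + 1)) d : ℝ) * f d =
      f 1 + ∑ i ∈ range e, ((p : ℝ) ^ (i + 1) - (p : ℝ) ^ i) * f (p ^ (i + 1)) +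
        (p : ℝ) ^ (e + 1) * f (p ^ (e + 1)) := by
  rw [Nat.divisors_prime_pow hp, sum_map, sum_range_succ, sum_range_succ']
  simp only [Function.Embedding.coeFn_mk]
  rw [nn_prime_pow hp (by omega), nn_prime_pow hp le_rfl]
  rw [sum_congr rfl (g := fun i => ((p : ℝ) ^ (i + 1) - (p : ℝ) ^ i) * f (p ^ (i + 1)))]
  · simp; ring
  · intro i hi
    have := mem_range.mp hi
    rw [nn_prime_pow hp (by omega), if_neg (by omega), if_neg (by omega)]
    simp

lemma SS_prime_pow {p e : ℕ} (hp : p.Prime) :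
    SS (p ^ (e + 1)) = (p : ℝ) ^ (e + 1) + (p : ℝ) ^ e := by
  have := sum_prime_pow (e := e) hp (fun _ => 1)
  simp only [mul_one] at this
  rw [SS, this, sum_range_sub (fun i => (p : ℝ) ^ i)]
  simp; ring

lemma aux_sum {x : ℝ} (hx : x ≠ 1) (e : ℕ) :
    ∑ i ∈ range e, (x ^ (i + 1) - x ^ i) * ((i : ℝ) + 1) =
      (e + 1) * x ^ e - (x ^ (e + 1) - 1) / (x - 1) := by
  have : x - 1 ≠ 0 := sub_ne_zero.mpr hx
  induction e with
  | zero => simp; field_simp; simp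
  | succ e ih => rw [sum_range_succ, ih]; push_cast; field_simp; ring

lemma LL_prime_pow {p e : ℕ} (hp : p.Prime) :
    LL (p ^ (e + 1)) = ((p : ℝ) ^ (e + 1) + (p : ℝ) ^ e) *
      (((e + 1 : ℕ) : ℝ) * Real.log p - (((p : ℝ) ^ (e + 1) - 1) /
        ((p : ℝ) ^ e * ((p : ℝ) ^ 2 - 1))) * Real.log p) := by
  have := sum_prime_pow (e := e) hp (fun d => Real.log d)
  rw [LL, this]
  have h1 : ∀ i : ℕ, Real.log ((p ^ i : ℕ) : ℝ) = i * Real.log p := by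
    intro i; push_cast; rw [Real.log_pow]
  have hp1 : (p : ℝ) ≠ 1 := by exact_mod_cast hp.one_lt.ne'
  have h2 : ∑ i ∈ range e, ((p : ℝ) ^ (i + 1) - (p : ℝ) ^ i) * Real.log ((p ^ (i + 1) : ℕ) : ℝ)
      = (∑ i ∈ range e, ((p : ℝ) ^ (i + 1) - (p : ℝ) ^ i) * ((i : ℝ) + 1)) * Real.log p := by
    rw [sum_mul]; apply sum_congr rfl; intro i _; rw [h1]; push_cast; ring
  rw [h2, h1, aux_sum hp1]
  have hp0 : (p : ℝ) ≠ 0 := by exact_mod_cast hp.pos.ne'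
  have h3 : (p : ℝ) - 1 ≠ 0 := sub_ne_zero.mpr hp1
  have h4 : (p : ℝ) + 1 ≠ 0 := by positivity
  have h5 : (p : ℝ) ^ 2 - 1 = (p - 1) * (p + 1) := by ring
  rw [h5]
  simp only [Nat.cast_one, Real.log_one]
  push_cast
  field_simp
  ring

lemma psi_cast (N : ℕ) : (dedekindPsi N : ℝ) = N * ∏ p ∈ N.primeFactors, (1 + 1 / (p : ℝ)) := by
  have hd : (∏ p ∈ N.primeFactors, p) ∣ N * ∏ p ∈ N.primeFactors, (p + 1) :=
    (Nat.prod_primeFactors_dvd N).mul_right _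
  have h0 : ((∏ p ∈ N.primeFactors, p : ℕ) : ℝ) ≠ 0 := by
    rw [Nat.cast_ne_zero, prod_ne_zero_iff]
    intro p hp; exact (Nat.prime_of_mem_primeFactors hp).pos.ne'
  rw [dedekindPsi, Nat.cast_div hd h0, Nat.cast_mul, mul_div_assoc]
  congr 1
  push_cast
  rw [← prod_div_distrib]
  apply prod_congr rfl
  intro p hp
  have : (p : ℝ) ≠ 0 := by exact_mod_cast (Nat.prime_of_mem_primeFactors hp).pos.ne'
  field_simp

lemma psi_mul {M N : ℕ} (h : M.Coprime N) :
    (dedekindPsi (M * N) : ℝ) = dedekindPsi M * dedekindPsi N := by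
  rw [psi_cast, psi_cast, psi_cast, h.primeFactors_mul, prod_union h.disjoint_primeFactors]
  push_cast; ring

lemma lambda_mul {M N : ℕ} (h : M.Coprime N) : lambdaN (M * N) = lambdaN M + lambdaN N := by
  rw [lambdaN, h.primeFactors_mul, sum_union h.disjoint_primeFactors, lambdaN, lambdaN]
  congr 1
  · apply sum_congr rfl; intro p hp
    have : (M * N).factorization p = M.factorization p := by
      have := Nat.factorization_eq_of_coprime_left h (Nat.mem_primeFactors_iff_mem_primeFactorsList.mp hp)
      exact this
    rw [this]
  · apply sum_congr rfl; intro p hp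
    have : (M * N).factorization p = N.factorization p := by
      have := Nat.factorization_eq_of_coprime_right h (Nat.mem_primeFactors_iff_mem_primeFactorsList.mp hp)
      exact this
    rw [this]

lemma psi_lambda (N : ℕ) : 0 < N → SS N = dedekindPsi N ∧
    LL N = dedekindPsi N * (Real.log N - lambdaN N) ∧ Real.log N / 3 ≤ Real.log N - 2 * lambdaN N := by
  induction N using Nat.recOnPosPrimePosCoprime with
  | prime_pow p n hp hn =>
    intro _
    obtain ⟨e, rfl⟩ : ∃ e, n = e + 1 := ⟨n - 1, by omega⟩
    have hpf : (p ^ (e + 1)).primeFactors = {p} := Nat.primeFactors_prime_pow (by omega) hp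
    have hp0 : (p : ℝ) ≠ 0 := by exact_mod_cast hp.pos.ne'
    have hpsi : (dedekindPsi (p ^ (e + 1)) : ℝ) = (p : ℝ) ^ (e + 1) + (p : ℝ) ^ e := by
      rw [psi_cast, hpf]; simp; field_simp; ring
    have hlam : lambdaN (p ^ (e + 1)) = (((p : ℝ) ^ (e + 1) - 1) /
        ((p : ℝ) ^ e * ((p : ℝ) ^ 2 - 1))) * Real.log p := by
      rw [lambdaN, hpf, sum_singleton, Nat.Prime.factorization_pow hp]; simp
    refine ⟨by rw [SS_prime_pow hp, hpsi], ?_, ?_⟩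
    · rw [LL_prime_pow hp, hpsi, hlam]; push_cast; rw [Real.log_pow]; push_cast; ring
    · rw [hlam]; push_cast; rw [Real.log_pow]
      have hp2 : (2 : ℝ) ≤ p := by exact_mod_cast hp.two_le
      have hl : 0 < Real.log p := Real.log_pos (by linarith)
      have key : ((p : ℝ) ^ (e + 1) - 1) / ((p : ℝ) ^ e * ((p : ℝ) ^ 2 - 1)) ≤ ((e : ℝ) + 1) / 3 := by
        have h1 : ((p : ℝ) ^ (e + 1) - 1) = (p - 1) * ∑ i ∈ range (e + 1), (p : ℝ) ^ i := by
          rw [mul_geom_sum]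
        have h2 : ∑ i ∈ range (e + 1), (p : ℝ) ^ i ≤ (e + 1) * (p : ℝ) ^ e := by
          have : ∑ i ∈ range (e + 1), (p : ℝ) ^ i ≤ ∑ i ∈ range (e + 1), (p : ℝ) ^ e := by
            apply sum_le_sum; intro i hi
            exact pow_le_pow_right₀ (by linarith) (by have := mem_range.mp hi; omega)
          simpa using this
        have hpe : 0 < (p : ℝ) ^ e := by positivity
        have hq : (p : ℝ) ^ 2 - 1 = (p - 1) * (p + 1) := by ring
        have hp1 : 0 < (p : ℝ) - 1 := by linarith
        rw [hq, div_le_div_iff₀ (by positivity) (by norm_num), h1]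
        have h3 : (p - 1) * (∑ i ∈ range (e + 1), (p : ℝ) ^ i) * 3 ≤ (p - 1) * ((e + 1) * (p : ℝ) ^ e) * (p + 1) := by
          apply mul_le_mul _ (by linarith) (by norm_num) (by positivity)
          exact mul_le_mul_of_nonneg_left h2 hp1.le
        calc _ ≤ _ := h3
          _ = _ := by ring
      have := mul_le_mul_of_nonneg_right key hl.le
      push_cast
      nlinarith
  | zero => intro h; omega
  | one => intro _; simp [SS, LL, psi_cast, lambdaN, nn]
  | coprime a b ha hb hab iha ihb =>
    intro _
    obtain ⟨a1, a2, a3⟩ := iha (by omega)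
    obtain ⟨b1, b2, b3⟩ := ihb (by omega)
    have ha0 : (a : ℝ) ≠ 0 := by positivity
    have hb0 : (b : ℝ) ≠ 0 := by positivity
    rw [SS_mul hab, LL_mul hab, psi_mul hab, lambda_mul hab, a1, b1, a2, b2]
    push_cast
    rw [Real.log_mul ha0 hb0]
    refine ⟨rfl, by ring, by linarith⟩

lemma card_R {N : ℕ} (hN : 0 < N) : (R N).card = dedekindPsi N := by
  have h2 := sum_R hN (fun _ => (1 : ℝ))
  simp only [sum_const, nsmul_eq_mul, mul_one] at h2
  have := (psi_lambda N hN).1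
  rw [SS, ← h2] at this
  exact_mod_cast this

lemma sum_log_R {N : ℕ} (hN : 0 < N) :
    ∑ p ∈ R N, Real.log p.1 = dedekindPsi N * (Real.log N - lambdaN N) := by
  rw [sum_R hN (fun d => Real.log d)]
  exact (psi_lambda N hN).2.1

lemma log_sub_lambda {N : ℕ} (hN : 0 < N) :
    Real.log N / 3 ≤ Real.log N - 2 * lambdaN N := (psi_lambda N hN).2.2

end MP

namespace MP
open UpperHalfPlane MatrixGroups Filter
open scoped Real ModularForm Topology

lemma sigma3_le (n : ℕ) : ArithmeticFunction.sigma 3 n ≤ 2 * n ^ 3 := by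
  rcases Nat.eq_zero_or_pos n with rfl | hn
  · simp
  have h : (ArithmeticFunction.sigma 3 n : ℝ) ≤ 2 * (n : ℝ) ^ 3 := by
    rw [ArithmeticFunction.sigma_apply, ← Nat.sum_div_divisors]
    push_cast
    have h1 : ∀ d ∈ n.divisors, (((n / d : ℕ) : ℝ)) ^ 3 ≤ (n : ℝ) ^ 3 * (1 / (d : ℝ) ^ 2) := by
      intro d hd
      have hd0 : 0 < d := Nat.pos_of_mem_divisors hd
      have hd1 : (1 : ℝ) ≤ d := by exact_mod_cast hd0
      rw [Nat.cast_div (Nat.dvd_of_mem_divisors hd) (by positivity), div_pow, div_eq_mul_one_div]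
      apply mul_le_mul_of_nonneg_left _ (by positivity)
      apply one_div_le_one_div_of_le (by positivity)
      exact pow_le_pow_right₀ hd1 (by norm_num)
    refine (Finset.sum_le_sum h1).trans ?_
    rw [← Finset.mul_sum, mul_comm]
    apply mul_le_mul_of_nonneg_right _ (by positivity)
    have h2 : ∑ d ∈ n.divisors, (1 / (d : ℝ) ^ 2) ≤ ∑ d ∈ Finset.Ioc 0 n, (1 / (d : ℝ) ^ 2) := by
      apply Finset.sum_le_sum_of_subset_of_nonneg
      · intro d hd
        rw [Finset.mem_Ioc]
        exact ⟨Nat.pos_of_mem_divisors hd, Nat.divisor_le hd⟩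
      · intros; positivity
    refine h2.trans ?_
    have h3 : ∀ m : ℕ, 0 < m → ∑ d ∈ Finset.Ioc 0 m, (1 / (d : ℝ) ^ 2) ≤ (2 : ℝ) - 1 / (m : ℝ) := by
      intro m hm
      induction m, hm using Nat.le_induction with
      | base => norm_num
      | succ m hm ih =>
        have hm' : 0 < m := hm
        rw [← Finset.insert_Ioc_right_eq_Ioc_add_one (by omega : 0 ≤ m),
          Finset.sum_insert (by simp)]
        have : 1 / ((m + 1 : ℕ) : ℝ) ^ 2 ≤ 1 / m - 1 / ((m + 1 : ℕ) : ℝ) := by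
          push_cast
          rw [div_sub_div _ _ (by positivity) (by positivity), div_le_div_iff₀ (by positivity) (by positivity)]
          ring_nf
          nlinarith [(by positivity : (0:ℝ) < m)]
        linarith
    have := h3 n hn
    have : (0:ℝ) ≤ 1 / n := by positivity
    linarith
  exact_mod_cast h

lemma sigma3_le' (n : ℕ) : ArithmeticFunction.sigma 3 (n + 2) ≤ 9 * 4 ^ n := by
  rcases n with _ | _ | n
  · decide
  · decide
  · refine (sigma3_le _).trans ?_
    have : 2 * (n + 4) ^ 3 ≤ 9 * 4 ^ (n + 2) := by
      induction n with
      | zero => norm_num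
      | succ n ih =>
        have : 2 * (n + 1 + 4) ^ 3 ≤ 4 * (2 * (n + 4) ^ 3) := by ring_nf; nlinarith [sq_nonneg (n:ℤ)]
        calc _ ≤ _ := this
          _ ≤ 4 * (9 * 4 ^ (n + 2)) := by omega
          _ = _ := by ring
    exact this

lemma E₄_bound {q : ℂ} (hq : ‖q‖ < 1 / 4) :
    ‖E₄ q - 1 - 240 * q‖ ≤ 2160 * ‖q‖ ^ 2 / (1 - 4 * ‖q‖) := by
  set r := ‖q‖
  have hr0 : 0 ≤ r := norm_nonneg q
  have hgs : Summable fun n : ℕ => (4 * r) ^ n := summable_geometric_of_lt_one (by positivity) (by linarith)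
  have hb : ∀ n : ℕ, ‖(ArithmeticFunction.sigma 3 (n + 2) : ℂ) * q ^ (n + 2)‖ ≤ 9 * r ^ 2 * (4 * r) ^ n := by
    intro n
    rw [norm_mul, norm_pow, Complex.norm_natCast]
    have : (ArithmeticFunction.sigma 3 (n + 2) : ℝ) ≤ 9 * 4 ^ n := by exact_mod_cast sigma3_le' n
    calc _ ≤ (9 * 4 ^ n) * r ^ (n + 2) := mul_le_mul_of_nonneg_right this (by positivity)
      _ = _ := by rw [mul_pow, pow_add]; ring
  have hs2 : Summable fun n : ℕ => (ArithmeticFunction.sigma 3 (n + 2) : ℂ) * q ^ (n + 2) :=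
    Summable.of_norm_bounded (hgs.mul_left _) hb
  have hs1 : Summable fun n : ℕ => (ArithmeticFunction.sigma 3 (n + 1) : ℂ) * q ^ (n + 1) := by
    rw [← summable_nat_add_iff 1]; exact hs2
  have : E₄ q - 1 - 240 * q = 240 * ∑' n : ℕ, (ArithmeticFunction.sigma 3 (n + 2) : ℂ) * q ^ (n + 2) := by
    rw [E₄, hs1.tsum_eq_zero_add]
    simp
    ring
  rw [this, norm_mul]
  have h3 : ‖∑' n : ℕ, (ArithmeticFunction.sigma 3 (n + 2) : ℂ) * q ^ (n + 2)‖ ≤ 9 * r ^ 2 * (1 - 4 * r)⁻¹ := by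
    apply tsum_of_norm_bounded _ hb
    exact (hasSum_geometric_of_lt_one (by positivity) (by linarith)).mul_left _
  have : ‖(240 : ℂ)‖ = 240 := by norm_num
  rw [this, div_eq_mul_inv]
  linarith

lemma norm_qq (τ : ℍ) : ‖qq τ‖ = Real.exp (-2 * π * τ.im) := by
  rw [qq, Complex.norm_exp]; simp

lemma tendsto_qq : Tendsto (fun τ => ‖qq τ‖) atImInfty (𝓝 0) := by
  have : (fun τ => ‖qq τ‖) = (fun y => Real.exp (-2 * π * y)) ∘ UpperHalfPlane.im := by
    ext τ; exact norm_qq τ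
  rw [this]
  apply Tendsto.comp _ tendsto_comap
  apply Real.tendsto_exp_atBot.comp
  exact tendsto_id.const_mul_atTop_of_neg (by nlinarith [Real.pi_pos])

lemma tendsto_E4 : Tendsto (fun τ => ModularForm.E₄ τ) atImInfty (𝓝 1) := by
  rw [tendsto_iff_norm_sub_tendsto_zero]
  have h := tendsto_qq
  have h2 : Tendsto (fun τ => 2160 * ‖qq τ‖ ^ 2 / (1 - 4 * ‖qq τ‖) + 240 * ‖qq τ‖) atImInfty (𝓝 0) := by
    have := (((h.pow 2).const_mul 2160).div ((h.const_mul 4).const_sub 1) (by norm_num)).add (h.const_mul 240)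
    simpa using this
  refine tendsto_of_tendsto_of_tendsto_of_le_of_le' tendsto_const_nhds h2 (Eventually.of_forall fun _ => norm_nonneg _) ?_
  have : ∀ᶠ τ in atImInfty, ‖qq τ‖ < 1 / 4 := h.eventually (gt_mem_nhds (by norm_num))
  filter_upwards [this] with τ hτ
  have := E₄_bound hτ
  rw [E₄_eq] at this
  calc ‖ModularForm.E₄ τ - 1‖ = ‖(ModularForm.E₄ τ - 1 - 240 * qq τ) + 240 * qq τ‖ := by ring_nf
    _ ≤ _ := norm_add_le _ _
    _ ≤ _ := by
      have e : ‖(240 : ℂ) * qq τ‖ = 240 * ‖qq τ‖ := by rw [norm_mul]; norm_num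
      linarith

/-- the Euler product -/
noncomputable def EP (q : ℂ) : ℂ := ∏' n : ℕ, (1 - q ^ (n + 1)) ^ 24

lemma disc_eq (τ : ℍ) : ModularForm.discriminant τ = qq τ * EP (qq τ) := by
  rw [← Δ_eq, Δ, EP]

lemma tendsto_EP : Tendsto (fun τ => EP (qq τ)) atImInfty (𝓝 1) := by
  have := ModularForm.tendsto_atImInfty_tprod_one_sub_eta_q_pow
  refine this.congr fun τ => ?_
  rw [EP]
  have h2 : ∀ n : ℕ, ModularForm.eta_q n (τ : ℂ) = qq τ ^ (n + 1) := by
    intro n; rw [ModularForm.eta_q_eq_pow]; rfl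
  simp only [h2]

lemma tendsto_jH_qq : Tendsto (fun τ => jH τ * qq τ) atImInfty (𝓝 1) := by
  have h := (tendsto_E4.pow 3).div tendsto_EP one_ne_zero
  rw [one_pow, div_one] at h
  refine h.congr fun τ => ?_
  have h0 := ModularForm.discriminant_ne_zero τ
  rw [jH]
  simp only [Pi.div_apply]
  rw [disc_eq] at h0 ⊢
  have := left_ne_zero_of_mul h0
  have := right_ne_zero_of_mul h0
  field_simp

lemma tendsto_norm_jH : Tendsto (fun τ => ‖jH τ‖) atImInfty atTop := by
  have h1 : Tendsto (fun τ => ‖jH τ * qq τ‖) atImInfty (𝓝 1) := by simpa using tendsto_jH_qq.norm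
  have h2 : Tendsto (fun τ => ‖qq τ‖⁻¹) atImInfty atTop := by
    apply Tendsto.comp tendsto_inv_nhdsGT_zero
    rw [tendsto_nhdsWithin_iff]
    refine ⟨tendsto_qq, Eventually.of_forall fun τ => ?_⟩
    rw [norm_qq]; exact Real.exp_pos _
  refine (h1.pos_mul_atTop one_pos h2).congr fun τ => ?_
  have : ‖qq τ‖ ≠ 0 := by rw [norm_qq]; exact (Real.exp_pos _).ne'
  rw [norm_mul]; field_simp

lemma prod_norm_qq {N : ℕ} (hN : 0 < N) (τ : ℍ) :
    ∏ p ∈ R N, ‖qq (pt N p τ)‖ = ‖qq τ‖ ^ (R N).card := by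
  have : ∀ p ∈ R N, ‖qq (pt N p τ)‖ = Real.exp (-2 * π * τ.im * (((N / p.1 : ℕ) : ℝ) / p.1)) := by
    intro p hp; rw [norm_qq, im_pt hN hp]; congr 1; ring
  rw [Finset.prod_congr rfl this, ← Real.exp_sum, ← Finset.mul_sum, sum_div_R hN, norm_qq,
    ← Real.exp_nat_mul]
  congr 1; ring

lemma prod_disc {N : ℕ} (hN : 0 < N) : ∃ c : ℂ, c ≠ 0 ∧ ∀ τ : ℍ,
    ∏ p ∈ R N, ModularForm.discriminant (pt N p τ) = c * ModularForm.discriminant τ ^ (R N).card ∧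
    ∏ p ∈ R N, ‖ModularForm.discriminant (pt N p τ)‖ = ‖ModularForm.discriminant τ‖ ^ (R N).card := by
  obtain ⟨P, hP⟩ := weight12_poly _ (normForm hN ΔM)
  set K : ℂ := ∏ p ∈ R N, (p.1 : ℂ) ^ 12 with hK
  have hK0 : K ≠ 0 := by
    rw [hK, Finset.prod_ne_zero_iff]
    intro p hp
    have := (R_pos hN hp).1.ne'
    exact pow_ne_zero _ (by exact_mod_cast this)
  have hP' : ∀ τ, ∏ p ∈ R N, ModularForm.discriminant (pt N p τ) =
      K * P.eval (jH τ) * ModularForm.discriminant τ ^ (R N).card := by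
    intro τ
    have h0 := ModularForm.discriminant_ne_zero τ
    have h := hP τ
    rw [normForm_apply, Finset.prod_div_distrib] at h
    simp only [ΔM_apply] at h
    rw [← hK] at h
    rw [← h]; field_simp
  have hlim : Tendsto (fun τ => ‖K * P.eval (jH τ)‖) atImInfty (𝓝 1) := by
    have h1 : Tendsto (fun τ => (∏ p ∈ R N, ‖EP (qq (pt N p τ))‖) / ‖EP (qq τ)‖ ^ (R N).card) atImInfty
        (𝓝 ((∏ p ∈ R N, 1) / 1 ^ (R N).card)) := by
      have hE : Tendsto (fun τ => ‖EP (qq τ)‖) atImInfty (𝓝 1) := by simpa using tendsto_EP.norm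
      apply Tendsto.div _ (hE.pow _) (by simp)
      apply tendsto_finsetProd
      intro p hp
      exact hE.comp (tendsto_pt hN hp)
    simp only [Finset.prod_const_one, one_pow, div_one] at h1
    refine h1.congr fun τ => ?_
    have h0 := ModularForm.discriminant_ne_zero τ
    have hn := congrArg norm (hP' τ)
    rw [norm_mul, norm_prod, norm_pow] at hn
    simp only [disc_eq, norm_mul, Finset.prod_mul_distrib, mul_pow, prod_norm_qq hN] at hn
    rw [disc_eq] at h0
    have hq : ‖qq τ‖ ^ (R N).card ≠ 0 := pow_ne_zero _ (norm_ne_zero_iff.mpr (left_ne_zero_of_mul h0))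
    have he : ‖EP (qq τ)‖ ^ (R N).card ≠ 0 := pow_ne_zero _ (norm_ne_zero_iff.mpr (right_ne_zero_of_mul h0))
    rw [div_eq_iff he, norm_mul]
    apply mul_left_cancel₀ hq
    rw [hn]; ring
  have hdeg : P.degree ≤ 0 := by
    by_contra! hd
    have h2 : Tendsto (fun τ => ‖P.eval (jH τ)‖) atImInfty atTop :=
      P.tendsto_norm_atTop hd tendsto_norm_jH
    have h3 : Tendsto (fun τ => ‖K * P.eval (jH τ)‖) atImInfty atTop := by
      simp only [norm_mul]
      exact h2.const_mul_atTop (norm_pos_iff.mpr hK0)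
    exact not_tendsto_nhds_of_tendsto_atTop h3 _ hlim
  rw [Polynomial.eq_C_of_degree_le_zero hdeg] at hP' hlim
  simp only [Polynomial.eval_C] at hP' hlim
  have hn : ‖K * P.coeff 0‖ = 1 := tendsto_nhds_unique tendsto_const_nhds hlim
  refine ⟨K * P.coeff 0, ?_, fun τ => ⟨hP' τ, ?_⟩⟩
  · rw [← norm_ne_zero_iff, hn]; norm_num
  · rw [← norm_prod, hP', norm_mul, hn, one_mul, norm_pow]

lemma prod_sub_jH {N : ℕ} (hN : 0 < N) (x : ℂ) : ∃ P : Polynomial ℂ, ∀ τ : ℍ,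
    ∏ p ∈ R N, (x - jH (pt N p τ)) = P.eval (jH τ) := by
  obtain ⟨P, hP⟩ := weight12_poly _ (normForm hN (Fx x))
  obtain ⟨c, hc, hD⟩ := prod_disc hN
  set K : ℂ := ∏ p ∈ R N, (p.1 : ℂ) ^ 12 with hK
  have hK0 : K ≠ 0 := by
    rw [hK, Finset.prod_ne_zero_iff]
    intro p hp
    have := (R_pos hN hp).1.ne'
    exact pow_ne_zero _ (by exact_mod_cast this)
  refine ⟨Polynomial.C (K / c) * P, fun τ => ?_⟩
  have h0 := ModularForm.discriminant_ne_zero τ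
  have e : ∀ p ∈ R N, x - jH (pt N p τ) = Fx x (pt N p τ) / ModularForm.discriminant (pt N p τ) := by
    intro p hp
    have h0 := ModularForm.discriminant_ne_zero (pt N p τ)
    rw [Fx_apply, jH]; field_simp
  rw [Finset.prod_congr rfl e, Finset.prod_div_distrib, (hD τ).1, Polynomial.eval_mul,
    Polynomial.eval_C, ← hP, normForm_apply, Finset.prod_div_distrib, ← hK]
  field_simp

end MP

namespace MP
open UpperHalfPlane MatrixGroups Filter Polynomial
open scoped Real ModularForm Topology

lemma sep_clear {A : Type*} [CommRing A] [IsDomain A] [IsIntegrallyClosed A] [CharZero A] {W : A[X]}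
    (hm : W.Monic) (hi : Irreducible W) :
    ∃ r : A, r ≠ 0 ∧ ∃ a b : A[X], a * W + b * derivative W = C r := by
  have h1 := (hm.irreducible_iff_irreducible_map_fraction_map (K := FractionRing A)).mp hi
  obtain ⟨u, v, huv⟩ := h1.separable
  obtain ⟨b1, hb1, h1⟩ := IsLocalization.integerNormalization_spec (nonZeroDivisors A) u
  obtain ⟨b2, hb2, h2⟩ := IsLocalization.integerNormalization_spec (nonZeroDivisors A) v
  set u' := IsLocalization.integerNormalization (nonZeroDivisors A) u
  set v' := IsLocalization.integerNormalization (nonZeroDivisors A) v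
  refine ⟨b1 * b2, mul_ne_zero (nonZeroDivisors.ne_zero hb1) (nonZeroDivisors.ne_zero hb2),
    C b2 * u', C b1 * v', ?_⟩
  apply Polynomial.map_injective (algebraMap A (FractionRing A)) (IsFractionRing.injective _ _)
  have e1 : b1 • u = C (algebraMap A (FractionRing A) b1) * u := by
    rw [Algebra.smul_def]; rfl
  have e2 : b2 • v = C (algebraMap A (FractionRing A) b2) * v := by
    rw [Algebra.smul_def]; rfl
  simp only [Polynomial.map_add, Polynomial.map_mul, map_C, h1, h2, e1, e2, ← derivative_map, map_mul]
  linear_combination (C (algebraMap A (FractionRing A) b1) * C (algebraMap A (FractionRing A) b2)) * huv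

/-- evaluation of the coefficients -/
noncomputable def ev (y : ℂ) : MvPolynomial (Fin 1) ℤ →+* ℂ :=
  MvPolynomial.eval₂Hom (Int.castRingHom ℂ) (fun _ => y)

noncomputable def toPoly : MvPolynomial (Fin 1) ℤ →+* ℂ[X] :=
  MvPolynomial.eval₂Hom (C.comp (Int.castRingHom ℂ)) (fun _ => X)

lemma eval_toPoly (y : ℂ) (r : MvPolynomial (Fin 1) ℤ) : (toPoly r).eval y = ev y r := by
  have : (evalRingHom y).comp toPoly = ev y := by
    apply MvPolynomial.ringHom_ext
    · intro r; simp [toPoly, ev]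
    · intro i; simp [toPoly, ev]
  exact congrArg (fun f => f r) this

lemma toPoly_injective : Function.Injective toPoly := by
  have h : toPoly = (Polynomial.mapRingHom (Int.castRingHom ℂ)).comp
      (MvPolynomial.uniqueAlgEquiv ℤ (Fin 1) : MvPolynomial (Fin 1) ℤ →+* ℤ[X]) := by
    apply MvPolynomial.ringHom_ext
    · intro r; simp [toPoly]
    · intro i; simp [toPoly]
  rw [h]
  exact (Polynomial.map_injective _ (RingHom.injective_int _)).comp
    (MvPolynomial.uniqueAlgEquiv ℤ (Fin 1)).injective

/-- `P` as polynomial in `X`. -/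
noncomputable def WW (P : MvPolynomial (Fin 2) ℤ) : (MvPolynomial (Fin 1) ℤ)[X] :=
  MvPolynomial.finSuccEquiv ℤ 1 P

noncomputable def py (P : MvPolynomial (Fin 2) ℤ) (y : ℂ) : ℂ[X] := (WW P).map (ev y)

lemma evalBiv_eq (P : MvPolynomial (Fin 2) ℤ) (x y : ℂ) : evalBiv P x y = (py P y).eval x := by
  have : MvPolynomial.eval₂Hom (Int.castRingHom ℂ) ![x, y] =
      ((evalRingHom x).comp (mapRingHom (ev y))).comp
        (MvPolynomial.finSuccEquiv ℤ 1 : MvPolynomial (Fin 2) ℤ →+* (MvPolynomial (Fin 1) ℤ)[X]) := by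
    apply MvPolynomial.ringHom_ext
    · intro r; simp [ev]
    · intro i
      fin_cases i
      · simp [MvPolynomial.finSuccEquiv_X_zero]
      · have := MvPolynomial.finSuccEquiv_X_succ (R := ℤ) (n := 1) (j := 0)
        simp only [Fin.succ_zero_eq_one] at this
        simp [this, ev]
  exact congrArg (fun f => f P) this

/-- for fixed `x` the evaluation is polynomial in `y`. -/
lemma evalBiv_poly (P : MvPolynomial (Fin 2) ℤ) (x : ℂ) : ∃ Q : ℂ[X], ∀ y, evalBiv P x y = Q.eval y := by
  refine ⟨MvPolynomial.eval₂ (C.comp (Int.castRingHom ℂ)) ![C x, X] P, fun y => ?_⟩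
  have : MvPolynomial.eval₂Hom (Int.castRingHom ℂ) ![x, y] =
      (evalRingHom y).comp (MvPolynomial.eval₂Hom (C.comp (Int.castRingHom ℂ)) ![C x, X]) := by
    apply MvPolynomial.ringHom_ext
    · intro r; simp
    · intro i; fin_cases i <;> simp
  exact congrArg (fun f => f P) this

lemma prim_of_gcd {a b c d : ℤ} (h : Int.gcd (Int.gcd a b) (Int.gcd c d) = 1) :
    Prim !![a, b; c, d] := by
  intro k hk
  have h1 := hk 0 0
  have h2 := hk 0 1
  have h3 := hk 1 0
  have h4 := hk 1 1
  simp at h1 h2 h3 h4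
  have : k ∣ (Int.gcd (Int.gcd a b) (Int.gcd c d) : ℤ) :=
    Int.dvd_coe_gcd (Int.dvd_coe_gcd h1 h2) (Int.dvd_coe_gcd h3 h4)
  rw [h] at this
  exact isUnit_of_dvd_one (by simpa using this)

lemma coe_smul_pt {N : ℕ} (hN : 0 < N) {p : ℕ × ℕ} (hp : p ∈ R N) {a b c d : ℤ} {σ : SL(2, ℤ)}
    (h : !![a, b; c, d] = mt σ * toMat N p) (τ : ℍ) :
    ((a : ℂ) * τ + b) / ((c : ℂ) * τ + d) = ((σ • pt N p τ : ℍ) : ℂ) := by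
  rw [coe_smul_mt, coe_pt hN hp]
  have d0 : (p.1 : ℂ) ≠ 0 := by exact_mod_cast (R_pos hN hp).1.ne'
  have e00 := congrFun (congrFun h 0) 0
  have e01 := congrFun (congrFun h 0) 1
  have e10 := congrFun (congrFun h 1) 0
  have e11 := congrFun (congrFun h 1) 1
  simp only [toMat, Matrix.mul_apply, Fin.sum_univ_two, Matrix.of_apply, Matrix.cons_val',
    Matrix.cons_val_zero, Matrix.cons_val_one,
    Matrix.cons_val_fin_one, mul_zero, add_zero] at e00 e01 e10 e11
  rw [e00, e01, e10, e11]
  simp only [Int.cast_add, Int.cast_mul, Int.cast_natCast]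
  rw [show ((mt σ 0 0 : ℂ) * ((N / p.1 : ℕ) : ℂ) * τ + ((mt σ 0 0 : ℂ) * p.2 + mt σ 0 1 * p.1))
    = ((mt σ 0 0 : ℂ) * ((((N / p.1 : ℕ) : ℂ) * τ + p.2) / p.1) + mt σ 0 1) * p.1 by field_simp; ring]
  rw [show ((mt σ 1 0 : ℂ) * ((N / p.1 : ℕ) : ℂ) * τ + ((mt σ 1 0 : ℂ) * p.2 + mt σ 1 1 * p.1))
    = ((mt σ 1 0 : ℂ) * ((((N / p.1 : ℕ) : ℂ) * τ + p.2) / p.1) + mt σ 1 1) * p.1 by field_simp; ring]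
  rw [mul_div_mul_right _ _ d0]

lemma exists_gcd_of_mem {N : ℕ} (hN : 0 < N) {p : ℕ × ℕ} (hp : p ∈ R N) :
    (((N / p.1 : ℕ) : ℤ) * (p.1 : ℤ) - (p.2 : ℤ) * 0 = (N : ℤ)) ∧
      Int.gcd (Int.gcd ((N / p.1 : ℕ) : ℤ) p.2) (Int.gcd 0 p.1) = 1 := by
  obtain ⟨h1, h2, h3⟩ := (mem_R hN).mp hp
  constructor
  · rw [mul_zero, sub_zero]; exact_mod_cast Nat.div_mul_cancel h1
  · simp only [Int.gcd_natCast_natCast, Int.gcd_zero_left, Int.natAbs_natCast]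
    rw [← h3, Nat.gcd_comm (N / p.1), Nat.gcd_assoc, Nat.gcd_comm (N / p.1)]

/-- root set of `P(·, y)` at `y = j(τ)`. -/
lemma root_iff {N : ℕ} (hN : 0 < N) {P : MvPolynomial (Fin 2) ℤ} (hP : IsModularPolynomial N P)
    (τ : ℍ) (x : ℂ) : evalBiv P x (jH τ) = 0 ↔ ∃ p ∈ R N, x = jH (pt N p τ) := by
  rw [hP.2.2.2]
  constructor
  · rintro ⟨t, ht, a, b, c, d, hdet, hgcd, hx, hy⟩
    let τ' : ℍ := ⟨t, ht⟩
    obtain ⟨p, hp, σ, hM⟩ := exists_rep hN !![a, b; c, d] (by rw [Matrix.det_fin_two_of]; exact hdet)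
      (prim_of_gcd hgcd)
    have hx' : x = jH (pt N p τ') := by
      rw [hx, ← jH_smul σ, ← jInv_eq, ← coe_smul_pt hN hp hM τ']
    have hy' : jH τ = jH τ' := by rw [hy, ← jInv_eq τ']
    obtain ⟨Q, hQ⟩ := prod_sub_jH hN x
    have h0 : ∏ p ∈ R N, (x - jH (pt N p τ)) = 0 := by
      rw [hQ τ, hy', ← hQ τ']
      exact Finset.prod_eq_zero hp (by rw [hx', sub_self])
    obtain ⟨q, hq, h⟩ := Finset.prod_eq_zero_iff.mp h0
    exact ⟨q, hq, sub_eq_zero.mp h⟩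
  · rintro ⟨p, hp, hx⟩
    obtain ⟨h1, h2⟩ := exists_gcd_of_mem hN hp
    refine ⟨τ, τ.2, _, _, _, _, h1, h2, ?_, (jInv_eq τ).symm⟩
    rw [hx, ← jInv_eq, coe_pt hN hp]
    congr 1
    simp only [Int.cast_natCast, Int.cast_zero, zero_mul, zero_add]

lemma jH_pt_ne {N : ℕ} (hN : 0 < N) {p q : ℕ × ℕ} (hp : p ∈ R N) (hq : q ∈ R N) (hpq : p ≠ q) :
    ∀ᶠ τ in atImInfty, jH (pt N p τ) ≠ jH (pt N q τ) := by
  -- wlog d_q ≤ d_p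
  wlog hle : q.1 ≤ p.1 generalizing p q
  · filter_upwards [this hq hp hpq.symm (by omega)] with τ hτ
    exact hτ.symm
  have hu := tendsto_jH_qq.comp (tendsto_pt hN hp)
  have hv := tendsto_jH_qq.comp (tendsto_pt hN hq)
  obtain ⟨w, hw, hlim⟩ : ∃ w : ℂ, w ≠ 1 ∧ Tendsto (fun τ => qq (pt N q τ) / qq (pt N p τ)) atImInfty (𝓝 w) := by
    rcases hle.lt_or_eq with hlt | heq
    · refine ⟨0, by norm_num, ?_⟩
      rw [tendsto_zero_iff_norm_tendsto_zero]
      have hp1 := R_pos hN hp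
      have hq1 := R_pos hN hq
      set α : ℝ := ((N / p.1 : ℕ) : ℝ) / p.1
      set β : ℝ := ((N / q.1 : ℕ) : ℝ) / q.1
      have hαβ : α < β := by
        have hp0 : (0 : ℝ) < p.1 := by exact_mod_cast hp1.1
        have hq0 : (0 : ℝ) < q.1 := by exact_mod_cast hq1.1
        have hN0 : (0 : ℝ) < N := by exact_mod_cast hN
        have hpq0 : (q.1 : ℝ) < p.1 := by exact_mod_cast hlt
        simp only [α, β]
        rw [Nat.cast_div ((mem_R hN).mp hp).1 hp0.ne', Nat.cast_div ((mem_R hN).mp hq).1 hq0.ne']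
        gcongr
      have : (fun τ => ‖qq (pt N q τ) / qq (pt N p τ)‖) = (fun y => Real.exp (-2 * π * (β - α) * y)) ∘ UpperHalfPlane.im := by
        ext τ
        rw [norm_div, norm_qq, norm_qq, im_pt hN hp, im_pt hN hq, ← Real.exp_sub]
        simp only [Function.comp_apply]
        congr 1
        simp only [α, β]
        ring
      rw [this]
      apply Tendsto.comp _ tendsto_comap
      apply Real.tendsto_exp_atBot.comp
      exact tendsto_id.const_mul_atTop_of_neg (by nlinarith [Real.pi_pos])
    · have hb : p.2 ≠ q.2 := fun h => hpq (Prod.ext heq.symm h)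
      have hd0 : (p.1 : ℂ) ≠ 0 := by exact_mod_cast (R_pos hN hp).1.ne'
      refine ⟨Complex.exp (2 * π * Complex.I * (((q.2 : ℂ) - p.2) / p.1)), ?_, ?_⟩
      · intro h
        rw [Complex.exp_eq_one_iff] at h
        obtain ⟨n, hn⟩ := h
        have h2 : ((q.2 : ℂ) - p.2) / p.1 = n := by
          have : (2 * π * Complex.I : ℂ) ≠ 0 := Complex.two_pi_I_ne_zero
          apply mul_left_cancel₀ this
          rw [hn]; ring
        rw [div_eq_iff hd0] at h2
        have h3 : (q.2 : ℤ) - p.2 = n * p.1 := by exact_mod_cast h2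
        have l1 := ((mem_R hN).mp hp).2.1
        have l2 := ((mem_R hN).mp hq).2.1
        rw [heq] at l2
        have hn0 : n ≠ 0 := by rintro rfl; omega
        rcases lt_or_gt_of_ne hn0 with h | h
        · have : n * (p.1 : ℤ) ≤ -1 * p.1 := mul_le_mul_of_nonneg_right (by omega) (by omega)
          omega
        · have : 1 * (p.1 : ℤ) ≤ n * p.1 := mul_le_mul_of_nonneg_right (by omega) (by omega)
          omega
      · apply Tendsto.congr _ tendsto_const_nhds
        intro τ
        rw [qq, qq, ← Complex.exp_sub, coe_pt hN hp, coe_pt hN hq, heq]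
        congr 1
        field_simp
        ring
  have hlim2 := (hu.mul hlim).sub hv
  have hne : (1 : ℂ) * w - 1 ≠ 0 := by rw [one_mul]; exact sub_ne_zero.mpr hw
  filter_upwards [hlim2.eventually_ne hne] with τ hτ heq
  apply hτ
  have : qq (pt N p τ) ≠ 0 := Complex.exp_ne_zero _
  simp only [Function.comp_apply, heq]
  field_simp
  ring

lemma eventually_jH_ne_roots {r : ℂ[X]} (hr : r ≠ 0) : ∀ᶠ τ in atImInfty, r.eval (jH τ) ≠ 0 := by
  have hfin : (r.rootSet ℂ).Finite := rootSet_finite r ℂ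
  obtain ⟨B, hB⟩ := hfin.isBounded.exists_norm_le
  filter_upwards [tendsto_norm_jH.eventually_gt_atTop B] with τ hτ h0
  have := hB (jH τ) (by rw [mem_rootSet]; exact ⟨hr, by simpa using h0⟩)
  linarith

lemma py_eq_eventually {N : ℕ} (hN : 0 < N) {P : MvPolynomial (Fin 2) ℤ} (hP : IsModularPolynomial N P) :
    ∀ᶠ τ in atImInfty, (WW P).natDegree = (R N).card ∧
      py P (jH τ) = ∏ p ∈ R N, (X - C (jH (pt N p τ))) := by
  have hm : (WW P).Monic := hP.2.1
  have hirr : Irreducible (WW P) := (MulEquiv.irreducible_iff (MvPolynomial.finSuccEquiv ℤ 1)).mpr hP.1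
  obtain ⟨r, hr, a, b, hab⟩ := sep_clear hm hirr
  have hr' : toPoly r ≠ 0 := by
    rw [← map_zero toPoly]; exact toPoly_injective.ne hr
  have hdist : ∀ᶠ τ in atImInfty, ∀ p ∈ R N, ∀ q ∈ R N, p ≠ q → jH (pt N p τ) ≠ jH (pt N q τ) := by
    rw [Filter.eventually_all_finset]
    intro p hp
    rw [Filter.eventually_all_finset]
    intro q hq
    by_cases h : p = q
    · exact Eventually.of_forall fun τ h' => absurd h h'
    · filter_upwards [jH_pt_ne hN hp hq h] with τ hτ _ using hτ
  filter_upwards [eventually_jH_ne_roots hr', hdist] with τ h1 h2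
  rw [eval_toPoly] at h1
  have hpm : (py P (jH τ)).Monic := hm.map _
  have hsep : (py P (jH τ)).Separable := by
    have := congrArg (Polynomial.map (ev (jH τ))) hab
    simp only [Polynomial.map_add, Polynomial.map_mul, map_C, ← derivative_map] at this
    refine ⟨C (ev (jH τ) r)⁻¹ * a.map (ev (jH τ)), C (ev (jH τ) r)⁻¹ * b.map (ev (jH τ)), ?_⟩
    have e : C (ev (jH τ) r)⁻¹ * C (ev (jH τ) r) = 1 := by
      rw [← C_mul, inv_mul_cancel₀ h1, C_1]
    rw [← e, ← this, py]; ring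
  have hnod := nodup_roots hsep
  have hroots : (py P (jH τ)).roots = (R N).val.map (fun p => jH (pt N p τ)) := by
    rw [Multiset.Nodup.ext hnod]
    · intro x
      rw [mem_roots hpm.ne_zero, IsRoot.def, ← evalBiv_eq, root_iff hN hP, Multiset.mem_map]
      constructor
      · rintro ⟨p, hp, h⟩; exact ⟨p, hp, h.symm⟩
      · rintro ⟨p, hp, h⟩; exact ⟨p, hp, h.symm⟩
    · apply Multiset.Nodup.map_on _ (R N).nodup
      intro p hp q hq h
      by_contra hne
      exact h2 p hp q hq hne h
  have hs := IsAlgClosed.splits (py P (jH τ))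
  constructor
  · have := hs.natDegree_eq_card_roots
    rw [hroots, Multiset.card_map, py, hm.natDegree_map] at this
    exact this
  · rw [hs.eq_prod_roots_of_monic hpm, hroots, Multiset.map_map]; rfl

lemma deg_eq {N : ℕ} (hN : 0 < N) {P : MvPolynomial (Fin 2) ℤ} (hP : IsModularPolynomial N P) :
    (WW P).natDegree = (R N).card := by
  obtain ⟨τ, h⟩ := (py_eq_eventually hN hP).exists
  exact h.1

lemma poly_eq_of_eventually {p q : ℂ[X]} (h : ∀ᶠ τ in atImInfty, p.eval (jH τ) = q.eval (jH τ)) :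
    p = q := by
  by_contra hne
  have h1 := eventually_jH_ne_roots (sub_ne_zero.mpr hne)
  obtain ⟨τ, h2, h3⟩ := (h.and h1).exists
  apply h3; rw [eval_sub, h2, sub_self]

lemma py_eq {N : ℕ} (hN : 0 < N) {P : MvPolynomial (Fin 2) ℤ} (hP : IsModularPolynomial N P) (τ : ℍ) :
    py P (jH τ) = ∏ p ∈ R N, (X - C (jH (pt N p τ))) := by
  apply Polynomial.funext
  intro x
  obtain ⟨Q1, h1⟩ := prod_sub_jH hN x
  obtain ⟨Q2, h2⟩ := evalBiv_poly P x
  have : Q2 = Q1 := by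
    apply poly_eq_of_eventually
    filter_upwards [py_eq_eventually hN hP] with τ hτ
    rw [← h1, ← h2, evalBiv_eq, hτ.2, eval_prod]; simp
  rw [← evalBiv_eq, h2, this, ← h1, eval_prod]; simp

lemma jH_surj {N : ℕ} (hN : 0 < N) {P : MvPolynomial (Fin 2) ℤ} (hP : IsModularPolynomial N P) (y : ℂ) :
    ∃ τ : ℍ, jH τ = y := by
  have hm : (py P y).Monic := Monic.map _ hP.2.1
  have hd : (py P y).natDegree = (R N).card := by
    have hm0 : (WW P).Monic := hP.2.1
    rw [py, hm0.natDegree_map, deg_eq hN hP]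
  have hpos : 0 < (R N).card := by
    apply Finset.card_pos.mpr
    exact ⟨(1, 0), (mem_R hN).mpr (by simp)⟩
  obtain ⟨x, hx⟩ := IsAlgClosed.exists_root (py P y) (by
    rw [degree_eq_natDegree hm.ne_zero, hd]; exact_mod_cast hpos.ne')
  rw [IsRoot.def, ← evalBiv_eq, hP.2.2.2] at hx
  obtain ⟨t, ht, a, b, c, d, -, -, -, hy⟩ := hx
  exact ⟨⟨t, ht⟩, by rw [hy, ← jInv_eq]⟩

lemma swap_modular {N : ℕ} (hN : 0 < N) {P : MvPolynomial (Fin 2) ℤ} (hP : IsModularPolynomial N P) :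
    IsModularPolynomial N (MvPolynomial.rename (⇑(Equiv.swap (0 : Fin 2) 1)) P) := by
  have hinv : MvPolynomial.rename (⇑(Equiv.swap (0 : Fin 2) 1))
      (MvPolynomial.rename (⇑(Equiv.swap (0 : Fin 2) 1)) P) = P := by
    rw [MvPolynomial.rename_rename]
    have : (⇑(Equiv.swap (0 : Fin 2) 1) ∘ ⇑(Equiv.swap (0 : Fin 2) 1)) = id := by
      ext i; simp
    rw [this, MvPolynomial.rename_id]; rfl
  have hev : ∀ x y, evalBiv (MvPolynomial.rename (⇑(Equiv.swap (0 : Fin 2) 1)) P) x y = evalBiv P y x := by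
    intro x y
    rw [evalBiv, MvPolynomial.eval₂_rename, evalBiv]
    congr 1
    ext i; fin_cases i <;> simp
  refine ⟨?_, hP.2.2.1, by rw [hinv]; exact hP.2.1, ?_⟩
  · exact (MulEquiv.irreducible_iff (MvPolynomial.renameEquiv ℤ (Equiv.swap (0 : Fin 2) 1))).mpr hP.1
  · intro x y
    rw [hev, hP.2.2.2]
    have key : ∀ x y : ℂ, (∃ τ : ℂ, 0 < τ.im ∧ ∃ a b c d : ℤ,
      a * d - b * c = (N : ℤ) ∧
      Int.gcd (Int.gcd a b) (Int.gcd c d) = 1 ∧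
      x = jInv (((a : ℂ) * τ + b) / ((c : ℂ) * τ + d)) ∧ y = jInv τ) → (∃ τ : ℂ, 0 < τ.im ∧ ∃ a b c d : ℤ,
      a * d - b * c = (N : ℤ) ∧
      Int.gcd (Int.gcd a b) (Int.gcd c d) = 1 ∧
      y = jInv (((a : ℂ) * τ + b) / ((c : ℂ) * τ + d)) ∧ x = jInv τ) := by
      rintro x y ⟨t, ht, a, b, c, d, hdet, hgcd, hx, hy⟩
      let τ : ℍ := ⟨t, ht⟩
      obtain ⟨p, hp, σ, hM⟩ := exists_rep hN !![a, b; c, d] (by rw [Matrix.det_fin_two_of]; exact hdet)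
        (prim_of_gcd hgcd)
      have hc := coe_smul_pt hN hp hM τ
      have hcd : (c : ℂ) * t + d ≠ 0 := by
        intro h0
        have hc' : ((a : ℂ) * t + b) / ((c : ℂ) * t + d) = ((σ • pt N p τ : ℍ) : ℂ) := hc
        rw [h0, div_zero] at hc'
        exact (σ • pt N p τ).ne_zero hc'.symm
      refine ⟨((a : ℂ) * t + b) / ((c : ℂ) * t + d), ?_, d, -b, -c, a, by linarith, ?_, ?_, hx⟩
      · have hc' : ((a : ℂ) * t + b) / ((c : ℂ) * t + d) = ((σ • pt N p τ : ℍ) : ℂ) := hc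
        rw [hc']; exact (σ • pt N p τ).2
      · have : Int.gcd (Int.gcd d (-b)) (Int.gcd (-c) a) = Int.gcd (Int.gcd a b) (Int.gcd c d) := by
          simp only [Int.gcd_neg, Int.neg_gcd, Int.gcd_natCast_natCast]
          rw [Int.gcd_comm d b, Int.gcd_comm c a]
          simp only [Int.gcd_def]
          apply Nat.dvd_antisymm <;>
          · refine Nat.dvd_gcd (Nat.dvd_gcd ?_ ?_) (Nat.dvd_gcd ?_ ?_)
            all_goals first
              | exact (Nat.gcd_dvd_right _ _).trans (Nat.gcd_dvd_right _ _)
              | exact (Nat.gcd_dvd_right _ _).trans (Nat.gcd_dvd_left _ _)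
              | exact (Nat.gcd_dvd_left _ _).trans (Nat.gcd_dvd_right _ _)
              | exact (Nat.gcd_dvd_left _ _).trans (Nat.gcd_dvd_left _ _)
        rw [this, hgcd]
      · rw [hy]
        congr 1
        have hdetc : (a : ℂ) * d - b * c = N := by exact_mod_cast hdet
        have hN0 : (N : ℂ) ≠ 0 := by exact_mod_cast hN.ne'
        have e1 : ((d : ℂ) * (((a : ℂ) * t + b) / ((c : ℂ) * t + d)) + ((-b : ℤ) : ℂ)) = N * t / ((c : ℂ) * t + d) := by
          push_cast; rw [← hdetc, eq_div_iff hcd, add_mul, mul_assoc, div_mul_cancel₀ _ hcd]; ring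
        have e2 : (((-c : ℤ) : ℂ) * (((a : ℂ) * t + b) / ((c : ℂ) * t + d)) + (a : ℂ)) = N / ((c : ℂ) * t + d) := by
          push_cast; rw [← hdetc, eq_div_iff hcd, add_mul, mul_assoc, div_mul_cancel₀ _ hcd]; ring
        rw [e1, e2, div_div_div_cancel_right₀ hcd, mul_div_cancel_left₀ _ hN0]
    exact ⟨key y x, key x y⟩

theorem degrees {N : ℕ} (hN : 0 < N) {P : MvPolynomial (Fin 2) ℤ} (hP : IsModularPolynomial N P) :
    MvPolynomial.degreeOf 0 P = dedekindPsi N ∧ MvPolynomial.degreeOf 1 P = dedekindPsi N := by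
  have h : ∀ Q : MvPolynomial (Fin 2) ℤ, IsModularPolynomial N Q → MvPolynomial.degreeOf 0 Q = dedekindPsi N := by
    intro Q hQ
    rw [← MvPolynomial.natDegree_finSuccEquiv, ← card_R hN]
    exact deg_eq hN hQ
  refine ⟨h P hP, ?_⟩
  rw [← h _ (swap_modular hN hP), ← MvPolynomial.degreeOf_rename_of_injective (Equiv.swap (0 : Fin 2) 1).injective 1]
  simp

end MP

namespace MP
open UpperHalfPlane MatrixGroups Filter Polynomial
open scoped Real ModularForm Topology

noncomputable def gg (τ : ℍ) : ℝ := ‖ModularForm.discriminant τ‖ * τ.im ^ 6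

noncomputable def ff (τ : ℍ) : ℝ :=
  max (‖ModularForm.E₄ τ‖ ^ 3) ‖ModularForm.discriminant τ‖ * τ.im ^ 6

lemma im_smul' (σ : SL(2, ℤ)) (τ : ℍ) : (σ • τ).im = τ.im / ‖denom σ τ‖ ^ 2 := by
  rw [ModularGroup.im_smul_eq_div_normSq, Complex.normSq_eq_norm_sq]

lemma gg_smul (σ : SL(2, ℤ)) (τ : ℍ) : gg (σ • τ) = gg τ := by
  have h : ‖denom σ τ‖ ≠ 0 := norm_ne_zero_iff.mpr (denom_ne_zero σ τ)
  rw [gg, gg, im_smul', disc_smul, norm_mul, norm_pow, div_pow]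
  field_simp

lemma ff_smul (σ : SL(2, ℤ)) (τ : ℍ) : ff (σ • τ) = ff τ := by
  have h : ‖denom σ τ‖ ≠ 0 := norm_ne_zero_iff.mpr (denom_ne_zero σ τ)
  have h2 : max (‖ModularForm.E₄ (σ • τ)‖ ^ 3) ‖ModularForm.discriminant (σ • τ)‖
    = ‖denom σ τ‖ ^ 12 * max (‖ModularForm.E₄ τ‖ ^ 3) ‖ModularForm.discriminant τ‖ := by
    rw [disc_smul, E4_smul, mul_max_of_nonneg _ _ (by positivity), norm_mul, norm_mul, norm_pow, norm_pow,
      mul_pow, ← pow_mul]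
  rw [ff, ff, im_smul', h2, div_pow]
  field_simp

lemma gg_pos (τ : ℍ) : 0 < gg τ := by
  have := norm_pos_iff.mpr (ModularForm.discriminant_ne_zero τ)
  have := τ.im_pos
  unfold gg; positivity

lemma gg_le_ff (τ : ℍ) : gg τ ≤ ff τ := by
  unfold gg ff
  have := τ.im_pos
  gcongr
  exact le_max_right _ _

lemma ff_pos (τ : ℍ) : 0 < ff τ := (gg_pos τ).trans_le (gg_le_ff τ)

lemma log_max_jH (τ : ℍ) : Real.log (max 1 ‖jH τ‖) = Real.log (ff τ) - Real.log (gg τ) := by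
  rw [← Real.log_div (ff_pos τ).ne' (gg_pos τ).ne']
  congr 1
  have h1 := norm_pos_iff.mpr (ModularForm.discriminant_ne_zero τ)
  have h2 := τ.im_pos
  rw [ff, gg, mul_div_mul_right _ _ (by positivity), ← max_div_div_right h1.le, div_self h1.ne', jH,
    norm_div, norm_pow, max_comm]

lemma sum_log_gg {N : ℕ} (hN : 0 < N) (τ : ℍ) : ∑ p ∈ R N, Real.log (gg (pt N p τ)) =
    dedekindPsi N * Real.log (gg τ) - 6 * dedekindPsi N * (Real.log N - 2 * lambdaN N) := by
  obtain ⟨c, -, hc⟩ := prod_disc hN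
  have h1 := (hc τ).2
  have hp := fun τ => norm_pos_iff.mpr (ModularForm.discriminant_ne_zero τ)
  have h2 : ∀ p ∈ R N, Real.log (gg (pt N p τ)) = Real.log ‖ModularForm.discriminant (pt N p τ)‖
      + 6 * (Real.log N + Real.log τ.im) - 12 * Real.log p.1 := by
    intro p hpR
    obtain ⟨a1, a2⟩ := R_pos hN hpR
    have h1 : (0 : ℝ) < p.1 := by exact_mod_cast a1
    have hN' : (0 : ℝ) < N := by exact_mod_cast hN
    have h3 := τ.im_pos
    rw [gg, Real.log_mul (hp _).ne' (pow_pos (pt N p τ).im_pos 6).ne', Real.log_pow, im_pt hN hpR,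
      Nat.cast_div ((mem_R hN).mp hpR).1 h1.ne', Real.log_mul (by positivity) h3.ne', Real.log_div (by positivity) h1.ne',
      Real.log_div hN'.ne' h1.ne']
    push_cast; ring
  have h3 : ∑ p ∈ R N, Real.log ‖ModularForm.discriminant (pt N p τ)‖
      = dedekindPsi N * Real.log ‖ModularForm.discriminant τ‖ := by
    rw [← Real.log_prod (fun p _ => (hp _).ne'), h1, Real.log_pow, card_R hN]
  rw [Finset.sum_congr rfl h2, Finset.sum_sub_distrib, Finset.sum_add_distrib, ← Finset.mul_sum, ← Finset.mul_sum, sum_log_R hN, h3,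
    Finset.sum_const, card_R hN, gg, Real.log_mul (hp _).ne' (pow_pos τ.im_pos 6).ne', Real.log_pow, nsmul_eq_mul]
  push_cast; ring

lemma mahler_log {N : ℕ} (hN : 0 < N) {P : MvPolynomial (Fin 2) ℤ} (hP : IsModularPolynomial N P) (τ : ℍ) :
    Real.log (py P (jH τ)).mahlerMeasure = 6 * dedekindPsi N * (Real.log N - 2 * lambdaN N)
      - dedekindPsi N * Real.log (gg τ) + ∑ p ∈ R N, Real.log (ff (pt N p τ)) := by
  rw [py_eq hN hP, Finset.prod_eq_multiset_prod, prod_mahlerMeasure_eq_mahlerMeasure_prod, Multiset.map_map,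
    ← Finset.prod_eq_multiset_prod]
  simp only [Function.comp_apply, mahlerMeasure_X_sub_C]
  rw [Real.log_prod (fun p _ => by positivity), Finset.sum_congr rfl (fun p _ => log_max_jH _),
    Finset.sum_sub_distrib, sum_log_gg hN]
  ring

end MP

namespace MP
open UpperHalfPlane MatrixGroups Filter Polynomial
open scoped Real ModularForm Topology Modular

lemma abs_log_one_sub {w : ℂ} (hw : ‖w‖ ≤ 1 / 4) : |Real.log ‖1 - w‖| ≤ 3 / 2 * ‖w‖ := by
  have h0 := norm_nonneg w
  have h1 : 1 - ‖w‖ ≤ ‖1 - w‖ := by simpa using norm_sub_norm_le (1 : ℂ) w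
  have h2 : ‖1 - w‖ ≤ 1 + ‖w‖ := by simpa using norm_sub_le (1 : ℂ) w
  have hp : 0 < ‖1 - w‖ := by linarith
  rw [abs_le]
  constructor
  · have h3 := Real.one_sub_inv_le_log_of_pos hp
    have h4 : ‖1 - w‖⁻¹ ≤ 1 + 3 / 2 * ‖w‖ := by
      rw [inv_le_iff_one_le_mul₀ hp]
      nlinarith
    linarith
  · have h3 := Real.log_le_sub_one_of_pos hp
    linarith

lemma EP_bound {q : ℂ} (hq : ‖q‖ ≤ 1 / 100) :
    ‖1 - q‖ ^ 24 * Real.exp (-48 * ‖q‖ ^ 2) ≤ ‖EP q‖ ∧ ‖EP q‖ ≤ ‖1 - q‖ ^ 24 * Real.exp (48 * ‖q‖ ^ 2) := by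
  set r := ‖q‖ with hr
  have hr0 : 0 ≤ r := norm_nonneg q
  have hm : Multipliable fun n : ℕ ↦ (1 - q ^ (n + 1)) ^ 24 :=
    (ModularForm.multipliable_one_sub_pow (by linarith)).pow 24
  have ht := (hm.tendsto_prod_tprod_nat.comp (tendsto_add_atTop_nat 1)).norm
  have hS : ∀ n : ℕ, ‖∏ k ∈ Finset.range (n + 1), (1 - q ^ (k + 1)) ^ 24‖ = ‖1 - q‖ ^ 24 *
      Real.exp (24 * ∑ k ∈ Finset.range n, Real.log ‖1 - q ^ (k + 2)‖) := by
    intro n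
    rw [Finset.prod_range_succ', norm_mul, norm_prod, mul_comm]
    congr 1
    · simp
    · rw [Finset.mul_sum, Real.exp_sum]
      apply Finset.prod_congr rfl
      intro k _
      rw [norm_pow, mul_comm, Real.exp_mul, Real.exp_log]
      · norm_cast
      · rw [norm_pos_iff, sub_ne_zero]
        intro h
        have : ‖q ^ (k + 2)‖ = 1 := by rw [← h]; simp
        rw [norm_pow] at this
        have h2 : ‖q‖ ^ (k + 2) < 1 := pow_lt_one₀ hr0 (by linarith) (by lia)
        linarith
  have hS2 : ∀ n : ℕ, |∑ k ∈ Finset.range n, Real.log ‖1 - q ^ (k + 2)‖| ≤ 2 * r ^ 2 := by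
    intro n
    calc _ ≤ ∑ k ∈ Finset.range n, |Real.log ‖1 - q ^ (k + 2)‖| := Finset.abs_sum_le_sum_abs _ _
      _ ≤ ∑ k ∈ Finset.range n, 3 / 2 * r ^ 2 * r ^ k := by
        apply Finset.sum_le_sum
        intro k _
        have h1 : ‖q ^ (k + 2)‖ = r ^ 2 * r ^ k := by rw [norm_pow, ← hr]; ring
        have h2 : r ^ k ≤ 1 := pow_le_one₀ hr0 (by linarith)
        have h3 : r ^ 2 * r ^ k ≤ 1 / 4 := by
          calc r ^ 2 * r ^ k ≤ (1 / 100) ^ 2 * 1 := by gcongr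
            _ ≤ _ := by norm_num
        refine (abs_log_one_sub (by rw [h1]; exact h3)).trans ?_
        rw [h1]; linarith
      _ = 3 / 2 * r ^ 2 * ∑ k ∈ Finset.range n, r ^ k := by rw [Finset.mul_sum]
      _ ≤ 3 / 2 * r ^ 2 * (1 - r)⁻¹ := by
        gcongr
        rw [← tsum_geometric_of_lt_one hr0 (by linarith)]
        exact (summable_geometric_of_lt_one hr0 (by linarith)).sum_le_tsum _ (fun _ _ => by positivity)
      _ ≤ 3 / 2 * r ^ 2 * (4 / 3) := by
        gcongr
        rw [inv_le_comm₀ (by linarith) (by norm_num)]; linarith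
      _ = _ := by ring
  constructor
  · refine ge_of_tendsto ht (Eventually.of_forall fun n => ?_)
    simp only [Function.comp]
    rw [hS]
    have := abs_le.mp (hS2 n)
    exact mul_le_mul_of_nonneg_left (Real.exp_le_exp.mpr (by linarith [this.1])) (by positivity)
  · refine le_of_tendsto ht (Eventually.of_forall fun n => ?_)
    simp only [Function.comp]
    rw [hS]
    have := abs_le.mp (hS2 n)
    exact mul_le_mul_of_nonneg_left (Real.exp_le_exp.mpr (by linarith [this.2])) (by positivity)

lemma gg_eq (τ : ℍ) : gg τ = Real.exp (-2 * π * τ.im) * ‖EP (qq τ)‖ * τ.im ^ 6 := by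
  rw [gg, disc_eq, norm_mul, norm_qq]

lemma log_gg_bound {τ : ℍ} (h : ‖qq τ‖ ≤ 1 / 100) :
    |Real.log (gg τ) - (-2 * π * τ.im + 24 * Real.log ‖1 - qq τ‖ + 6 * Real.log τ.im)| ≤ 48 * ‖qq τ‖ ^ 2 := by
  obtain ⟨h1, h2⟩ := EP_bound h
  have hp : 0 < ‖1 - qq τ‖ := by
    have : 1 - ‖qq τ‖ ≤ ‖1 - qq τ‖ := by simpa using norm_sub_norm_le (1 : ℂ) (qq τ)
    linarith
  have hE : 0 < ‖EP (qq τ)‖ := lt_of_lt_of_le (by positivity) h1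
  have hy := τ.im_pos
  have e1 := Real.log_le_log (by positivity) h1
  have e2 := Real.log_le_log hE h2
  rw [Real.log_mul (by positivity) (by positivity), Real.log_pow, Real.log_exp] at e1 e2
  rw [gg_eq, Real.log_mul (by positivity) (by positivity), Real.log_mul (by positivity) (by positivity),
    Real.log_exp, Real.log_pow, abs_le]
  push_cast at *
  constructor <;> linarith

lemma mt_ST : mt (ModularGroup.S * ModularGroup.T) = !![0, -1; 1, 1] := by
  rw [mt_mul]
  ext i j
  fin_cases i <;> fin_cases j <;> simp [mt, Matrix.mul_apply, ModularGroup.S, ModularGroup.T]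

lemma STρ : (ModularGroup.S * ModularGroup.T) • ρ = ρ := by
  apply UpperHalfPlane.ext
  have h := ρ_sq
  have h1 : (ρ : ℂ) + 1 ≠ 0 := by
    intro h0
    have : (ρ : ℂ) ^ 2 = 0 := by rw [h]; linear_combination -h0
    exact ρ.ne_zero (by simpa using this)
  rw [coe_smul_mt, mt_ST]
  simp only [Matrix.of_apply, Matrix.cons_val', Matrix.cons_val_zero, Matrix.cons_val_one,
    Matrix.cons_val_fin_one, Int.cast_zero, Int.cast_one, Int.cast_neg, zero_mul, zero_add, one_mul]
  rw [div_eq_iff h1]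
  linear_combination -h

lemma E4_ρ : ModularForm.E₄ ρ = 0 := by
  have h := E4_smul (ModularGroup.S * ModularGroup.T) ρ
  rw [STρ, denom_mt, mt_ST] at h
  simp only [Matrix.of_apply, Matrix.cons_val', Matrix.cons_val_zero, Matrix.cons_val_one,
    Matrix.cons_val_fin_one, Int.cast_one, one_mul] at h
  have h2 := ρ_sq
  have h4 : ((ρ : ℂ) + 1) ^ 4 = -ρ - 1 := by
    rw [← h2]
    rw [show (ρ : ℂ) + 1 = -ρ ^ 2 by rw [h2]; ring]
    have h3 : (ρ : ℂ) ^ 3 = 1 := by linear_combination ((ρ : ℂ) - 1) * h2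
    linear_combination ((ρ : ℂ) ^ 5 + ρ ^ 2) * h3
  rw [h4] at h
  have h5 : ModularForm.E₄ ρ * ((ρ : ℂ) + 2) = 0 := by linear_combination h
  rcases mul_eq_zero.mp h5 with h6 | h6
  · exact h6
  · exfalso
    have := congrArg Complex.im h6
    simp at this
    exact ρ.im_pos.ne' this

lemma im_ρ : ρ.im = √3 / 2 := rfl

lemma jH_ρ : jH ρ = 0 := by rw [jH, E4_ρ]; simp

lemma sqrt3_bounds : 1.73205 < √3 ∧ √3 < 1.732051 := by
  constructor
  · rw [Real.lt_sqrt (by norm_num)]; norm_num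
  · rw [Real.sqrt_lt' (by norm_num)]; norm_num

lemma im_fd {τ : ℍ} (h : τ ∈ 𝒟) : √3 / 2 ≤ τ.im := by
  have := ModularGroup.three_le_four_mul_im_sq_of_mem_fd h
  have h2 := τ.im_pos
  have : √3 ≤ 2 * τ.im := by
    rw [Real.sqrt_le_left (by positivity)]; linarith
  linarith

/-- `e^{-π√3}` -/
noncomputable def r0 : ℝ := Real.exp (-2 * π * (√3 / 2))

lemma r0_bounds : 0.00433 ≤ r0 ∧ r0 ≤ 0.00434 := by
  obtain ⟨a1, a2⟩ := sqrt3_bounds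
  have p1 := Real.pi_gt_d6
  have p2 := Real.pi_lt_d6
  have h1 : 5.4413 ≤ π * √3 := by nlinarith
  have h2 : π * √3 ≤ 5.4415 := by nlinarith
  have e1 := Real.exp_one_gt_d9
  have e2 := Real.exp_one_lt_d9
  have hexp : ∀ x : ℝ, Real.exp (5 + x) = Real.exp 1 ^ 5 * Real.exp x := by
    intro x; rw [Real.exp_add, ← Real.exp_nat_mul]; norm_num
  have hr : r0 = (Real.exp (π * √3))⁻¹ := by
    rw [r0, ← Real.exp_neg]; congr 1; ring
  rw [hr]
  constructor
  · rw [le_inv_comm₀ (by norm_num) (by positivity)]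
    calc Real.exp (π * √3) ≤ Real.exp (5 + 0.4415) := Real.exp_le_exp.mpr (by linarith)
      _ = Real.exp 1 ^ 5 * Real.exp 0.4415 := hexp _
      _ ≤ 2.7182818286 ^ 5 * (∑ m ∈ Finset.range 6, (0.4415 : ℝ) ^ m / m.factorial +
        0.4415 ^ 6 * (6 + 1) / ((6).factorial * 6)) := by
        gcongr
        exact Real.exp_bound' (by norm_num) (by norm_num) (n := 6) (by norm_num)
      _ ≤ _ := by norm_num [Finset.sum_range_succ, Nat.factorial]
  · rw [inv_le_comm₀ (by positivity) (by norm_num)]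
    calc _ ≤ 2.7182818283 ^ 5 * (∑ m ∈ Finset.range 6, (0.4413 : ℝ) ^ m / m.factorial) := by
          norm_num [Finset.sum_range_succ, Nat.factorial]
      _ ≤ Real.exp 1 ^ 5 * Real.exp 0.4413 := by
        gcongr
        exact Real.sum_le_exp_of_nonneg (by norm_num) 6
      _ = Real.exp (5 + 0.4413) := (hexp _).symm
      _ ≤ _ := Real.exp_le_exp.mpr (by linarith)

lemma norm_qq_fd {τ : ℍ} (h : τ ∈ 𝒟) : ‖qq τ‖ ≤ r0 := by
  rw [norm_qq, r0, Real.exp_le_exp]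
  have := im_fd h
  have := Real.pi_pos
  nlinarith

lemma norm_qq_ρ : ‖qq ρ‖ = r0 := by rw [norm_qq, r0, im_ρ]

lemma E4_fd {τ : ℍ} (h : τ ∈ 𝒟) : ‖ModularForm.E₄ τ - (1 + 240 * qq τ)‖ ≤ 0.0415 := by
  have h1 := norm_qq_fd h
  have h2 := r0_bounds.2
  have h0 := norm_nonneg (qq τ)
  have h3 := E₄_bound (q := qq τ) (by linarith)
  rw [E₄_eq, sub_sub] at h3
  refine h3.trans ?_
  rw [div_le_iff₀ (by linarith)]
  nlinarith

lemma log_gg_ρ_le : Real.log (gg ρ) ≤ -2 * π * (√3 / 2) + 24 * Real.log (1 + r0) + 6 * Real.log (√3 / 2) + 48 * r0 ^ 2 := by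
  have hr := r0_bounds
  have h := log_gg_bound (τ := ρ) (by rw [norm_qq_ρ]; linarith)
  rw [norm_qq_ρ, im_ρ] at h
  have h1 : ‖1 - qq ρ‖ ≤ 1 + r0 := by rw [← norm_qq_ρ]; simpa using norm_sub_le (1 : ℂ) (qq ρ)
  have h2 : 1 - r0 ≤ ‖1 - qq ρ‖ := by rw [← norm_qq_ρ]; simpa using norm_sub_norm_le (1 : ℂ) (qq ρ)
  have h3 := Real.log_le_log (by linarith) h1
  have := (abs_le.mp h).2
  linarith

lemma ff_lower_A {z : ℍ} (hz : z ∈ 𝒟) (h : 0.21 ≤ ‖1 + 240 * qq z‖) :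
    Real.log (gg ρ) - 0.025 ≤ Real.log (ff z) := by
  have h1 := E4_fd hz
  have h2 : 0.1685 ≤ ‖ModularForm.E₄ z‖ := by
    have := norm_sub_norm_le (1 + 240 * qq z) (ModularForm.E₄ z)
    rw [norm_sub_rev] at this
    linarith
  have hr := r0_bounds
  have hρ := log_gg_ρ_le
  have hy := im_fd hz
  have h3 : 0 < √3 / 2 := by positivity
  have h4 : 0.1685 ^ 3 * (√3 / 2) ^ 6 ≤ ff z := by
    rw [ff]
    gcongr
    exact (pow_le_pow_left₀ (by norm_num) h2 3).trans (le_max_left _ _)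
  have h5 := Real.log_le_log (by positivity) h4
  rw [Real.log_mul (by norm_num) (by positivity), Real.log_pow, Real.log_pow] at h5
  have h6 : -1.787 ≤ Real.log 0.1685 := by
    rw [Real.le_log_iff_exp_le (by norm_num), Real.exp_neg, inv_le_comm₀ (by positivity) (by norm_num)]
    calc _ ≤ 2.7182818283 * (∑ m ∈ Finset.range 6, (0.787 : ℝ) ^ m / m.factorial) := by
          norm_num [Finset.sum_range_succ, Nat.factorial]
      _ ≤ Real.exp 1 * Real.exp 0.787 := by
        gcongr
        · exact Real.exp_one_gt_d9.le
        · exact Real.sum_le_exp_of_nonneg (by norm_num) 6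
      _ = _ := by rw [← Real.exp_add]; norm_num
  have h7 : Real.log (1 + r0) ≤ r0 := by
    have := Real.log_le_sub_one_of_pos (show 0 < 1 + r0 by linarith)
    linarith
  have p1 := Real.pi_gt_d6
  have a1 := sqrt3_bounds.1
  have h8 : 5.4413 ≤ π * √3 := by nlinarith
  push_cast at h5
  nlinarith

lemma log_y_lower {z : ℍ} {t : ℝ} (ht0 : 0 ≤ t) (hzt : z.im = √3 / 2 + t) :
    6.928 * t - 4.0001 * t ^ 2 ≤ 6 * (Real.log z.im - Real.log (√3 / 2)) := by
  have s3 := sqrt3_bounds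
  have h30 : 0 < √3 / 2 := by positivity
  rw [← Real.log_div z.im_pos.ne' h30.ne']
  obtain ⟨s, hs⟩ : ∃ s, s = t / (√3 / 2) := ⟨_, rfl⟩
  have hs0 : 0 ≤ s := by rw [hs]; positivity
  have e : z.im / (√3 / 2) = 1 + s := by rw [hzt, hs, add_div, div_self h30.ne']
  rw [e]
  have h1 := Real.le_log_one_add_of_nonneg hs0
  have h2 : s - s ^ 2 / 2 ≤ 2 * s / (s + 2) := by
    rw [le_div_iff₀ (by linarith)]; nlinarith [pow_nonneg hs0 3]
  have hts : t = s * (√3 / 2) := by rw [hs]; field_simp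
  have hsq : √3 ^ 2 = 3 := Real.sq_sqrt (by norm_num)
  have e2 : t ^ 2 = s ^ 2 * (3 / 4) := by rw [hts, mul_pow, div_pow, hsq]; norm_num
  rw [e2]
  have e3 : 6.928 * t ≤ 6 * s := by rw [hts]; linarith [mul_le_mul_of_nonneg_left s3.2.le hs0]
  nlinarith [sq_nonneg s]

set_option maxHeartbeats 800000 in
lemma ff_lower_B {z : ℍ} (hz : z ∈ 𝒟) (h : ‖1 + 240 * qq z‖ < 0.21) :
    Real.log (gg ρ) - 0.025 ≤ Real.log (ff z) := by
  refine le_trans ?_ (Real.log_le_log (gg_pos z) (gg_le_ff z))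
  have hρ := log_gg_ρ_le
  have hr := r0_bounds
  have hqr := norm_qq_fd hz
  have hy := im_fd hz
  have hg := (abs_le.mp (log_gg_bound (τ := z) (by linarith))).1
  set q := qq z with hq
  set r := ‖q‖ with hrdef
  have hc : ‖1 + 240 * q‖ ^ 2 < 0.21 ^ 2 := pow_lt_pow_left₀ h (norm_nonneg _) (by norm_num)
  have hrsq : r ^ 2 = q.re ^ 2 + q.im ^ 2 := by
    rw [hrdef, ← Complex.normSq_eq_norm_sq, Complex.normSq_apply]; ring
  rw [← Complex.normSq_eq_norm_sq, Complex.normSq_apply] at hc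
  simp at hc
  set u := -q.re with hu
  have hre : q.re = -u := by rw [hu]; ring
  have hu1 : (0.9559 + 57600 * r ^ 2) / 480 ≤ u := by
    rw [hrsq, hre]; rw [hre] at hc; norm_num at hc; linarith
  have hu2 : u ≤ r := by
    have := Complex.abs_re_le_norm q
    rw [hre, abs_neg] at this
    exact (le_abs_self u).trans this
  have hu0 : 0 ≤ u := le_trans (by positivity) hu1
  have hr1 : 0.79 / 240 ≤ r := by
    have h1 := norm_sub_norm_le (1 : ℂ) (-(240 * q))
    rw [sub_neg_eq_add, norm_neg, norm_mul, ← hrdef] at h1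
    norm_num at h1 ⊢
    linarith
  -- t
  obtain ⟨t, ht⟩ : ∃ t, t = z.im - √3 / 2 := ⟨_, rfl⟩
  have ht0 : 0 ≤ t := by linarith
  have hzt : z.im = √3 / 2 + t := by linarith
  have hre0 : r = r0 * Real.exp (-(2 * π * t)) := by
    rw [hrdef, hq, norm_qq, r0, ← Real.exp_add, hzt]; congr 1; ring
  have p1 := Real.pi_gt_d4
  have p2 := Real.pi_lt_d4
  have hx0 : 0 ≤ 2 * π * t := by positivity
  have hx1 : 2 * π * t ≤ 0.2795 := by
    by_contra! hcon
    have e1 := Real.quadratic_le_exp_of_nonneg hx0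
    have e2 : r0 = r * Real.exp (2 * π * t) := by
      rw [hre0, mul_assoc, ← Real.exp_add]; simp
    nlinarith
  have ht1 : t ≤ 0.0446 := by nlinarith
  have hrl : r0 * (1 - 2 * π * t) ≤ r := by
    rw [hre0]
    have := Real.add_one_le_exp (-(2 * π * t))
    exact mul_le_mul_of_nonneg_left (by linarith) (by linarith)
  have hr2 : r0 ^ 2 * (1 - 4 * π * t) ≤ r ^ 2 := by
    have h1 : (r0 * (1 - 2 * π * t)) ^ 2 ≤ r ^ 2 := pow_le_pow_left₀ (mul_nonneg (by linarith) (by linarith)) hrl 2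
    nlinarith [sq_nonneg (r0 * (2 * π * t))]
  -- log |1-q|
  have hl1 : Real.log (1 + u) ≤ Real.log ‖1 - q‖ := by
    apply Real.log_le_log (by linarith)
    have := Complex.abs_re_le_norm (1 - q)
    rw [Complex.sub_re, Complex.one_re, hre] at this
    refine le_trans ?_ this
    rw [sub_neg_eq_add]; exact le_abs_self _
  have hl2 : Real.log (1 + r0) - Real.log (1 + u) ≤ r0 - u := by
    rw [← Real.log_div (by linarith) (by linarith)]
    have := Real.log_le_sub_one_of_pos (show 0 < (1 + r0) / (1 + u) by apply div_pos <;> linarith)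
    refine this.trans ?_
    rw [div_sub_one (by linarith), div_le_iff₀ (by linarith)]
    nlinarith
  -- log y
  have s3 := sqrt3_bounds
  have hl3 : 6.928 * t - 4.0001 * t ^ 2 ≤ 6 * (Real.log z.im - Real.log (√3 / 2)) :=
    log_y_lower ht0 hzt
  have hg' : -(2 * π * t) + 24 * (Real.log (1 + u) - Real.log (1 + r0))
     + 6 * (Real.log z.im - Real.log (√3 / 2)) - 96 * r0 ^ 2 ≤ Real.log (gg z) - Real.log (gg ρ) := by
    have : r ^ 2 ≤ r0 ^ 2 := pow_le_pow_left₀ (norm_nonneg _) hqr 2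
    rw [hzt] at hg ⊢
    linarith
  have hB1 : r0 ^ 2 ≤ 0.00434 ^ 2 := pow_le_pow_left₀ (by linarith) hr.2 2
  have hB2 : 0.00433 ^ 2 ≤ r0 ^ 2 := pow_le_pow_left₀ (by linarith) hr.1 2
  have hp : π * t ≤ 3.1416 * t := by nlinarith
  have hB3 : r0 ^ 2 * (π * t) ≤ 0.00434 ^ 2 * (3.1416 * t) := by gcongr
  have ht2 : t ^ 2 ≤ 0.0446 * t := by nlinarith
  norm_num at hB1 hB2 hB3 hu1
  linarith

lemma ff_lower (z : ℍ) : Real.log (gg ρ) - 0.025 ≤ Real.log (ff z) := by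
  obtain ⟨g, hg⟩ := ModularGroup.exists_smul_mem_fd z
  rw [← ff_smul g z]
  rcases le_or_gt 0.21 ‖1 + 240 * qq (g • z)‖ with h | h
  · exact ff_lower_A hg h
  · exact ff_lower_B hg h

end MP

namespace MP
open UpperHalfPlane MatrixGroups Filter Polynomial
open scoped Real ModularForm Topology Modular

lemma coeff_toPoly (r : MvPolynomial (Fin 1) ℤ) (k : ℕ) :
    (toPoly r).coeff k = ((MvPolynomial.coeff (Finsupp.single 0 k) r : ℤ) : ℂ) := by
  induction r using MvPolynomial.induction_on' with
  | monomial u a =>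
    have hu : u = Finsupp.single 0 (u 0) := by
      ext; simp
    have h1 : toPoly (MvPolynomial.monomial u a) = C (a : ℂ) * X ^ (u 0) := by
      rw [toPoly, MvPolynomial.coe_eval₂Hom, MvPolynomial.eval₂_monomial]
      simp
    rw [h1, coeff_C_mul, coeff_X_pow, MvPolynomial.coeff_monomial]
    by_cases h : k = u 0
    · subst h; simp [← hu]
    · have : u ≠ Finsupp.single 0 k := by
        intro h2; apply h; rw [h2]; simp
      simp [h, this]
  | add p q hp hq => simp [hp, hq]

/-- maximal absolute value of the coefficients. -/
noncomputable def HH (P : MvPolynomial (Fin 2) ℤ) : ℕ :=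
  P.support.sup fun m => (MvPolynomial.coeff m P).natAbs

lemma coeff_le_HH (P : MvPolynomial (Fin 2) ℤ) (m : Fin 2 →₀ ℕ) :
    (MvPolynomial.coeff m P).natAbs ≤ HH P := by
  by_cases h : m ∈ P.support
  · exact Finset.le_sup (f := fun m => (MvPolynomial.coeff m P).natAbs) h
  · rw [MvPolynomial.notMem_support_iff] at h
    simp [h]

lemma py_coeff (P : MvPolynomial (Fin 2) ℤ) (y : ℂ) (i : ℕ) :
    (py P y).coeff i = (toPoly ((WW P).coeff i)).eval y := by
  rw [eval_toPoly, py, coeff_map]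

lemma toPoly_coeff (P : MvPolynomial (Fin 2) ℤ) (i k : ℕ) :
    (toPoly ((WW P).coeff i)).coeff k =
      ((MvPolynomial.coeff ((Finsupp.single 0 k : Fin 1 →₀ ℕ).cons i) P : ℤ) : ℂ) := by
  rw [coeff_toPoly, WW, MvPolynomial.finSuccEquiv_coeff_coeff]

lemma three_le_psi {N : ℕ} (hN : 2 ≤ N) : 3 ≤ dedekindPsi N := by
  have hN0 : 0 < N := by lia
  rw [← card_R hN0]
  have hsub : ({(1, 0), (N, 0), (N, 1)} : Finset (ℕ × ℕ)) ⊆ R N := by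
    intro p hp
    simp only [Finset.mem_insert, Finset.mem_singleton] at hp
    rw [mem_R hN0]
    rcases hp with rfl | rfl | rfl
    · simp
    · simp [Nat.div_self hN0, hN0]
    · simp [Nat.div_self hN0]; lia
  have hc : ({(1, 0), (N, 0), (N, 1)} : Finset (ℕ × ℕ)).card = 3 := by
    rw [Finset.card_eq_three]
    exact ⟨_, _, _, by simp; lia, by simp, by simp, rfl⟩
  rw [← hc]
  exact Finset.card_le_card hsub

lemma py_monic {N : ℕ} {P : MvPolynomial (Fin 2) ℤ} (hP : IsModularPolynomial N P) (y : ℂ) :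
    (py P y).Monic := Monic.map _ hP.2.1

lemma py_natDegree {N : ℕ} (hN : 0 < N) {P : MvPolynomial (Fin 2) ℤ} (hP : IsModularPolynomial N P) (y : ℂ) :
    (py P y).natDegree = dedekindPsi N := by
  have hm0 : (WW P).Monic := hP.2.1
  rw [py, hm0.natDegree_map, deg_eq hN hP, card_R hN]

lemma one_le_HH {N : ℕ} {P : MvPolynomial (Fin 2) ℤ} (hP : IsModularPolynomial N P) : 1 ≤ HH P := by
  by_contra! h
  have h0 : HH P = 0 := by lia
  have : P = 0 := by
    ext m
    have := coeff_le_HH P m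
    rw [h0] at this
    simpa using this
  exact hP.1.ne_zero this

lemma exp_ineq {D S : ℝ} (hD : 3 ≤ D) (hS : 2 * Real.log 2 * D ≤ S) :
    1 + D * Real.exp (2 * (S - 0.2106 * D)) < Real.exp (2 * (S - 0.025 * D)) := by
  have l2 := Real.log_two_gt_d9
  have hS' : 1.386 * D ≤ S := by nlinarith
  obtain ⟨W, hW⟩ : ∃ W, W = Real.exp (2 * (S - 0.025 * D)) := ⟨_, rfl⟩
  have hW0 : 0 < W := by rw [hW]; positivity
  have h1 : 1000 ≤ W := by
    have : Real.exp 1 ^ 8 ≤ W := by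
      rw [hW, ← Real.exp_nat_mul, Real.exp_le_exp]; push_cast; linarith
    refine le_trans ?_ this
    calc (1000 : ℝ) ≤ 2.7 ^ 8 := by norm_num
      _ ≤ _ := by gcongr; linarith [Real.exp_one_gt_d9]
  have h2 : Real.exp (2 * (S - 0.2106 * D)) = W * Real.exp (-(0.3712 * D)) := by
    rw [hW, ← Real.exp_add]; congr 1; ring
  have h3 : D * Real.exp (-(0.3712 * D)) ≤ 3 / 3.01 := by
    rw [Real.exp_neg, ← div_eq_mul_inv, div_le_div_iff₀ (by positivity) (by norm_num)]
    have e1 : Real.exp (0.3712 * D) = Real.exp 1.1136 * Real.exp (0.3712 * (D - 3)) := by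
      rw [← Real.exp_add]; congr 1; ring
    have e2 := Real.add_one_le_exp (0.3712 * (D - 3))
    have e3 : 3.01 ≤ Real.exp 1.1136 := by
      refine le_trans ?_ (Real.sum_le_exp_of_nonneg (by norm_num) 6)
      norm_num [Finset.sum_range_succ, Nat.factorial]
    rw [e1]
    calc D * 3.01 ≤ 3 * (3.01 * (0.3712 * (D - 3) + 1)) := by linarith
      _ ≤ _ := by
        have : 0 ≤ 0.3712 * (D - 3) + 1 := by linarith
        gcongr
  rw [← hW, h2]
  have : D * (W * Real.exp (-(0.3712 * D))) ≤ W * (3 / 3.01) := by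
    calc _ = W * (D * Real.exp (-(0.3712 * D))) := by ring
      _ ≤ _ := by gcongr
  nlinarith

theorem height_lower {N : ℕ} (hN : 2 ≤ N) {P : MvPolynomial (Fin 2) ℤ} (hP : IsModularPolynomial N P) :
    6 * (dedekindPsi N : ℝ) * (Real.log N - 2 * lambdaN N - 0.0351) ≤ polyHeight P := by
  have hN0 : 0 < N := by lia
  have hD : (3 : ℝ) ≤ dedekindPsi N := by exact_mod_cast three_le_psi hN
  set D : ℝ := (dedekindPsi N : ℝ) with hDdef
  set S : ℝ := 6 * D * (Real.log N - 2 * lambdaN N) with hSdef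
  have hS : 2 * Real.log 2 * D ≤ S := by
    have h1 := log_sub_lambda hN0
    have h2 : Real.log 2 ≤ Real.log N := Real.log_le_log (by norm_num) (by exact_mod_cast hN)
    have : Real.log 2 / 3 ≤ Real.log N - 2 * lambdaN N := by linarith
    calc _ = 6 * D * (Real.log 2 / 3) := by ring
      _ ≤ _ := by rw [hSdef]; gcongr
  have hM := mahler_log hN0 hP ρ
  rw [jH_ρ] at hM
  have hff : D * (Real.log (gg ρ) - 0.025) ≤ ∑ p ∈ R N, Real.log (ff (pt N p ρ)) := by
    rw [hDdef, ← card_R hN0, ← nsmul_eq_mul]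
    exact Finset.card_nsmul_le_sum _ _ _ (fun p _ => ff_lower _)
  have hM1 : S - 0.025 * D ≤ Real.log (py P 0).mahlerMeasure := by rw [hM]; linarith
  have hMpos : 0 < (py P 0).mahlerMeasure := mahlerMeasure_pos_of_ne_zero (py_monic hP 0).ne_zero
  have hM2 : Real.exp (S - 0.025 * D) ≤ (py P 0).mahlerMeasure := by
    rwa [← Real.le_log_iff_exp_le hMpos]
  have hcoef : ∀ i, ‖(py P 0).coeff i‖ ≤ HH P := by
    intro i
    rw [py_coeff, ← coeff_zero_eq_eval_zero, toPoly_coeff, Complex.norm_intCast, ← Int.cast_abs, Int.abs_eq_natAbs]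
    exact_mod_cast coeff_le_HH P _
  have hL : ∑ i ∈ (py P 0).support, ‖(py P 0).coeff i‖ ^ 2 ≤ 1 + D * (HH P : ℝ) ^ 2 := by
    calc _ ≤ ∑ i ∈ Finset.range ((py P 0).natDegree + 1), ‖(py P 0).coeff i‖ ^ 2 := by
          apply Finset.sum_le_sum_of_subset_of_nonneg supp_subset_range_natDegree_succ
          intros; positivity
      _ = ∑ i ∈ Finset.range (dedekindPsi N), ‖(py P 0).coeff i‖ ^ 2 + 1 := by
          rw [Finset.sum_range_succ, (py_monic hP 0).coeff_natDegree, py_natDegree hN0 hP]; simp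
      _ ≤ ∑ i ∈ Finset.range (dedekindPsi N), (HH P : ℝ) ^ 2 + 1 := by
          gcongr; exact hcoef _
      _ = _ := by simp [hDdef, add_comm]
  have hM3 : (py P 0).mahlerMeasure ^ 2 ≤ 1 + D * (HH P : ℝ) ^ 2 := by
    have := (py P 0).mahlerMeasure_le_sqrt_sum_sq_norm_coeff
    rw [Real.le_sqrt hMpos.le (by positivity)] at this
    exact this.trans hL
  change _ ≤ Real.log (HH P : ℝ)
  have hH : (1 : ℝ) ≤ HH P := by exact_mod_cast one_le_HH hP
  by_contra! hcon
  have h1 : (HH P : ℝ) < Real.exp (S - 0.2106 * D) := by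
    rw [← Real.log_lt_iff_lt_exp (by linarith)]
    refine hcon.trans_eq ?_
    rw [hSdef]; ring
  have h2 := exp_ineq hD hS
  have h3 : Real.exp (2 * (S - 0.025 * D)) ≤ (py P 0).mahlerMeasure ^ 2 := by
    rw [show 2 * (S - 0.025 * D) = (2 : ℕ) * (S - 0.025 * D) by push_cast; ring, Real.exp_nat_mul]
    gcongr
  have h4 : (HH P : ℝ) ^ 2 ≤ Real.exp (2 * (S - 0.2106 * D)) := by
    rw [show 2 * (S - 0.2106 * D) = (2 : ℕ) * (S - 0.2106 * D) by push_cast; ring, Real.exp_nat_mul]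
    gcongr
  have h5 : D * (HH P : ℝ) ^ 2 ≤ D * Real.exp (2 * (S - 0.2106 * D)) := by gcongr
  linarith

end MP

namespace MP
open UpperHalfPlane MatrixGroups Filter Polynomial
open scoped Real ModularForm Topology Modular

lemma fiber_key {N : ℕ} (hN : 0 < N) (v : ℤ × ℤ) :
    ∃ f : ℕ × ℕ → ℕ × ℕ, IsCoprime v.1 v.2 → ∀ p ∈ R N, ∀ s : SL(2, ℤ), ∀ m : ℕ, 0 < m →
      (mt s * toMat N p) 1 0 = m * v.1 → (mt s * toMat N p) 1 1 = m * v.2 →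
      ∃ p' ∈ R N, p'.1 = m ∧ f p' = p := by
  by_cases hv : IsCoprime v.1 v.2
  swap
  · exact ⟨id, fun h => absurd h hv⟩
  obtain ⟨σ, -, hσ⟩ := ModularGroup.bottom_row_surj (R := ℤ) (a := ![v.1, v.2]) (by simpa using hv)
  have hσ0 : mt σ 1 0 = v.1 := congrFun hσ 0
  have hσ1 : mt σ 1 1 = v.2 := congrFun hσ 1
  obtain ⟨f, hf, hinj, him⟩ := exists_perm hN σ
  refine ⟨f, fun _ p hp s m hm h0 h1 => ?_⟩
  rw [← him, Finset.mem_image] at hp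
  obtain ⟨p', hp', rfl⟩ := hp
  obtain ⟨hfp, σ', h2⟩ := hf p' hp'
  refine ⟨p', hp', ?_, rfl⟩
  set ρ := s * σ'⁻¹ with hρ
  have hK : mt ρ * toMat N p' * mt σ = mt s * toMat N (f p') := by
    rw [Matrix.mul_assoc, h2, ← Matrix.mul_assoc, ← mt_mul, hρ, inv_mul_cancel_right]
  have hK' : mt ρ * toMat N p' = mt s * toMat N (f p') * mt (σ⁻¹) := by
    rw [← hK, Matrix.mul_assoc _ (mt σ), ← mt_mul, mul_inv_cancel, mt_one, Matrix.mul_one]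
  have hone : mt σ * mt σ⁻¹ = 1 := by rw [← mt_mul, mul_inv_cancel, mt_one]
  have o0 := congrFun (congrFun hone 1) 0
  have o1 := congrFun (congrFun hone 1) 1
  have k0 := congrFun (congrFun hK' 1) 0
  have k1 := congrFun (congrFun hK' 1) 1
  rw [Matrix.mul_apply, Fin.sum_univ_two] at o0 o1
  rw [Matrix.mul_apply (M := mt s * toMat N (f p')), Fin.sum_univ_two, h0, h1] at k0 k1
  rw [hσ0, hσ1] at o0 o1
  have e0 : (mt ρ * toMat N p') 1 0 = 0 := by
    rw [k0]; simp at o0; linear_combination (m : ℤ) * o0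
  have e1 : (mt ρ * toMat N p') 1 1 = m := by
    rw [k1]; simp at o1; linear_combination (m : ℤ) * o1
  have hpos := R_pos hN hp'
  have hdet := mt_det ρ
  rw [Matrix.det_fin_two] at hdet
  rw [Matrix.mul_apply, Fin.sum_univ_two] at e0 e1
  simp only [toMat, Matrix.of_apply, Matrix.cons_val', Matrix.cons_val_zero, Matrix.cons_val_one,
    Matrix.cons_val_fin_one, mul_zero, add_zero] at e0 e1
  have r0 : mt ρ 1 0 = 0 := by
    rcases mul_eq_zero.mp e0 with h | h
    · exact h
    · exfalso; have := hpos.2; norm_cast at h; omega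
  rw [r0] at e1 hdet
  have r1 : mt ρ 1 1 = 1 ∨ mt ρ 1 1 = -1 :=
    Int.isUnit_iff.mp (IsUnit.of_mul_eq_one (mt ρ 0 0) (by linarith))
  rcases r1 with h | h
  · rw [h] at e1; zify; linarith
  · rw [h] at e1
    exfalso
    have : (0:ℤ) < m := by exact_mod_cast hm
    have : (0:ℤ) ≤ p'.1 := by positivity
    linarith

lemma im_smul_pt {N : ℕ} (hN : 0 < N) {p : ℕ × ℕ} (hp : p ∈ R N) (τ : ℍ) (s : SL(2, ℤ)) :
    (s • pt N p τ).im = N * τ.im /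
      ‖((mt s * toMat N p) 1 0 : ℂ) * τ + ((mt s * toMat N p) 1 1 : ℤ)‖ ^ 2 := by
  have hpos := R_pos hN hp
  have hd := ((mem_R hN).mp hp).1
  have d1 : (p.1 : ℂ) ≠ 0 := by exact_mod_cast hpos.1.ne'
  have d2 : (p.1 : ℝ) ≠ 0 := by exact_mod_cast hpos.1.ne'
  have hNe : (N : ℝ) = ((N / p.1 : ℕ) : ℝ) * p.1 := by
    exact_mod_cast (Nat.div_mul_cancel hd).symm
  have e : ((mt s * toMat N p) 1 0 : ℂ) * τ + ((mt s * toMat N p) 1 1 : ℤ)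
      = p.1 * denom s (pt N p τ) := by
    rw [denom_mt, coe_pt hN hp, Matrix.mul_apply, Matrix.mul_apply, Fin.sum_univ_two,
      Fin.sum_univ_two]
    simp only [toMat, Matrix.of_apply, Matrix.cons_val', Matrix.cons_val_zero, Matrix.cons_val_one,
      Matrix.cons_val_fin_one, mul_zero, add_zero]
    generalize N / p.1 = a
    push_cast
    field_simp
    ring
  have hn : ‖denom s (pt N p τ)‖ ≠ 0 := norm_ne_zero_iff.mpr (denom_ne_zero s _)
  rw [im_smul', im_pt hN hp, e, norm_mul, Complex.norm_natCast, hNe]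
  field_simp

lemma form_lower {τ : ℍ} (h : τ ∈ 𝒟) (u w : ℤ) :
    (max u.natAbs w.natAbs : ℕ) ^ 2 / (2 : ℝ) ≤ ‖(u : ℂ) * τ + w‖ ^ 2 := by
  obtain ⟨h1, h2⟩ := h
  have h2' := abs_le.mp h2
  rw [← Complex.normSq_eq_norm_sq]
  rw [Complex.normSq_apply] at *
  simp only [Complex.add_re, Complex.mul_re, Complex.intCast_re, Complex.intCast_im, zero_mul,
    sub_zero, Complex.add_im, Complex.mul_im, add_zero, coe_re, coe_im] at *
  set x := τ.re
  set y := τ.im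
  have key : ((u:ℝ) * x + w) * (u * x + w) + (u * y) * (u * y) ≥ u^2 - |(u:ℝ)| * |(w:ℝ)| + w^2 := by
    have hx : |x| ≤ 1/2 := h2
    have : |(u:ℝ) * w * x| ≤ |(u:ℝ)| * |(w:ℝ)| * (1/2) := by
      rw [abs_mul, abs_mul]; gcongr
    have := (abs_le.mp this).1
    nlinarith [mul_le_mul_of_nonneg_left h1 (sq_nonneg (u:ℝ))]
  have hmax : ((max u.natAbs w.natAbs : ℕ) : ℝ) = max |(u:ℝ)| |(w:ℝ)| := by
    rw [Nat.cast_max, Nat.cast_natAbs, Nat.cast_natAbs]; push_cast; rfl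
  rw [hmax]
  have e1 := sq_abs (u:ℝ)
  have e2 := sq_abs (w:ℝ)
  have a1 := abs_nonneg (u:ℝ)
  have a2 := abs_nonneg (w:ℝ)
  rw [← e1, ← e2] at key
  rcases max_choice |(u:ℝ)| |(w:ℝ)| with h | h <;> rw [h] <;>
    nlinarith [sq_nonneg (|(u:ℝ)| - |(w:ℝ)|), sq_nonneg (|(u:ℝ)| - 2*|(w:ℝ)|), sq_nonneg (2*|(u:ℝ)| - |(w:ℝ)|)]

lemma exists_data {N : ℕ} (hN : 0 < N) {τ : ℍ} (h : τ ∈ 𝒟) (hy : τ.im ≤ 1) {p : ℕ × ℕ}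
    (hp : p ∈ R N) (s : SL(2, ℤ)) (hs : s • pt N p τ ∈ 𝒟) :
    ∃ (m k : ℕ) (v : ℤ × ℤ), 0 < m ∧ 0 < k ∧ IsCoprime v.1 v.2 ∧ v ∈ Finset.box k ∧
      (mt s * toMat N p) 1 0 = m * v.1 ∧ (mt s * toMat N p) 1 1 = m * v.2 ∧
      (k : ℝ) ≤ 2 * √N / m ∧ √(s • pt N p τ).im ≤ √(2 * N) / (m * k) := by
  have him := im_smul_pt hN hp τ s
  set u := (mt s * toMat N p) 1 0 with hu
  set w := (mt s * toMat N p) 1 1 with hw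
  have hpos : 0 < (s • pt N p τ).im := (s • pt N p τ).im_pos
  have huw : u ≠ 0 ∨ w ≠ 0 := by
    by_contra! hc
    rw [him, hc.1, hc.2] at hpos
    simp at hpos
  have hg : 0 < Int.gcd u w := Int.gcd_pos_iff.mpr huw
  obtain ⟨u', hu'⟩ := Int.gcd_dvd_left (a := u) (b := w)
  obtain ⟨w', hw'⟩ := Int.gcd_dvd_right (a := u) (b := w)
  set m := Int.gcd u w with hm
  have hcop : IsCoprime u' w' := by
    rw [Int.isCoprime_iff_gcd_eq_one]
    have : m = m * Int.gcd u' w' := by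
      conv_lhs => rw [hm, hu', hw', Int.gcd_mul_left]
      simp
    exact Nat.eq_of_mul_eq_mul_left hg (by rw [← this, mul_one])
  set k := max u'.natAbs w'.natAbs with hk
  have hmk : max u.natAbs w.natAbs = m * k := by
    conv_lhs => rw [hu', hw']
    rw [Int.natAbs_mul, Int.natAbs_mul, hk, Nat.mul_max_mul_left]
    simp
  have hk0 : 0 < k := by
    rw [hk, Nat.pos_iff_ne_zero]
    intro h0
    have : max u.natAbs w.natAbs = 0 := by rw [hmk, hk, h0, mul_zero]
    omega
  have hmR : (0:ℝ) < m := by exact_mod_cast hg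
  have hkR : (0:ℝ) < k := by exact_mod_cast hk0
  have hNR : (0:ℝ) < N := by exact_mod_cast hN
  have hlow := form_lower h u w
  rw [hmk] at hlow
  push_cast at hlow
  have hle : (s • pt N p τ).im ≤ 2 * N / (m * k) ^ 2 := by
    rw [him]
    calc (N : ℝ) * τ.im / ‖(u : ℂ) * τ + w‖ ^ 2 ≤ N * 1 / (((m:ℝ) * k) ^ 2 / 2) := by gcongr
      _ = _ := by field_simp
  refine ⟨m, k, (u', w'), hg, hk0, hcop, Int.mem_box.mpr rfl, hu', hw', ?_, ?_⟩
  · have h1 := im_fd hs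
    have h2 := sqrt3_bounds.1
    have h3 : (1:ℝ)/2 ≤ 2 * N / (m * k) ^ 2 := by linarith
    rw [le_div_iff₀ (by positivity)] at h3
    rw [le_div_iff₀ hmR]
    apply le_of_sq_le_sq _ (by positivity)
    have := Real.sq_sqrt hNR.le
    nlinarith
  · rw [Real.sqrt_le_left (by positivity), div_pow, Real.sq_sqrt (by positivity)]
    exact hle

lemma sum_sqrt_im {N : ℕ} (hN : 0 < N) {τ : ℍ} (h : τ ∈ 𝒟) (hy : τ.im ≤ 1)
    (s : ℕ × ℕ → SL(2, ℤ)) (hs : ∀ p ∈ R N, s p • pt N p τ ∈ 𝒟) :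
    ∑ p ∈ R N, √(s p • pt N p τ).im ≤ 16 * √2 * (R N).card := by
  have hNR : (0:ℝ) < N := by exact_mod_cast hN
  choose f hf using fun v => fiber_key hN v
  have hex : ∀ p, ∃ x : (ℕ × ℕ) × (Σ _ : ℕ, ℤ × ℤ), p ∈ R N → x.1 ∈ R N ∧
      x.2.1 ∈ Finset.Icc 1 ⌊2 * √N / x.1.1⌋₊ ∧ x.2.2 ∈ Finset.box x.2.1 ∧ f x.2.2 x.1 = p ∧
      √(s p • pt N p τ).im ≤ √(2 * N) / (x.1.1 * x.2.1) := by
    intro p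
    by_cases hp : p ∈ R N
    swap
    · exact ⟨((0,0), ⟨0, (0,0)⟩), fun hh => absurd hh hp⟩
    obtain ⟨m, k, v, hm, hk, hcop, hbox, h0, h1, hle, hsq⟩ := exists_data hN h hy hp (s p) (hs p hp)
    obtain ⟨p', hp', hpm, hfp⟩ := hf v hcop p hp (s p) m hm h0 h1
    refine ⟨(p', ⟨k, v⟩), fun _ => ⟨hp', ?_, hbox, hfp, ?_⟩⟩
    · rw [Finset.mem_Icc]
      refine ⟨hk, Nat.le_floor ?_⟩
      simp only [hpm]; exact hle
    · simp only [hpm]; exact hsq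
  choose g hg using hex
  have hinj : Set.InjOn g (R N) := by
    intro p hp p' hp' e
    rw [← (hg p hp).2.2.2.1, ← (hg p' hp').2.2.2.1, e]
  let T : Finset ((ℕ × ℕ) × (Σ _ : ℕ, ℤ × ℤ)) := (R N).image g
  let G : (ℕ × ℕ) × (Σ _ : ℕ, ℤ × ℤ) → ℝ := fun x => √(2 * N) / (x.1.1 * x.2.1)
  have step1 : ∑ p ∈ R N, √(s p • pt N p τ).im ≤ ∑ x ∈ T, G x := by
    rw [Finset.sum_image hinj]
    exact Finset.sum_le_sum fun p hp => (hg p hp).2.2.2.2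
  let U : ℕ × ℕ → Finset (Σ _ : ℕ, ℤ × ℤ) := fun p' =>
    (Finset.Icc 1 ⌊2 * √(N:ℝ) / p'.1⌋₊).sigma fun k => Finset.box k
  let e : (Σ _ : ℕ × ℕ, Σ _ : ℕ, ℤ × ℤ) → (ℕ × ℕ) × (Σ _ : ℕ, ℤ × ℤ) := fun y => (y.1, y.2)
  have einj : Function.Injective e := by
    rintro ⟨a, b⟩ ⟨a', b'⟩ hh
    simp only [e, Prod.mk.injEq] at hh
    obtain ⟨rfl, rfl⟩ := hh; rfl
  have step2 : ∑ x ∈ T, G x ≤ ∑ x ∈ ((R N).sigma U).image e, G x := by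
    apply Finset.sum_le_sum_of_subset_of_nonneg
    · intro x hx
      obtain ⟨p, hp, rfl⟩ := Finset.mem_image.mp hx
      obtain ⟨a1, a2, a3, -, -⟩ := hg p hp
      refine Finset.mem_image.mpr ⟨⟨(g p).1, (g p).2⟩, ?_, rfl⟩
      rw [Finset.mem_sigma]
      refine ⟨a1, ?_⟩
      rw [Finset.mem_sigma]
      exact ⟨a2, a3⟩
    · intro x _ _
      positivity
  refine step1.trans (step2.trans ?_)
  rw [Finset.sum_image einj.injOn, Finset.sum_sigma]
  have step3 : ∀ p ∈ R N, ∑ x ∈ U p, G (e ⟨p, x⟩) ≤ 16 * √2 * (((N / p.1 : ℕ) : ℝ) / p.1) := by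
    intro p hp
    have hpos := R_pos hN hp
    have hd := ((mem_R hN).mp hp).1
    have d2 : (0:ℝ) < p.1 := by exact_mod_cast hpos.1
    have hNe : ((N / p.1 : ℕ) : ℝ) = N / p.1 := by
      rw [Nat.cast_div hd d2.ne']
    rw [Finset.sum_sigma]
    have : ∀ k ∈ Finset.Icc 1 ⌊2 * √(N:ℝ) / p.1⌋₊,
        ∑ v ∈ (Finset.box k : Finset (ℤ × ℤ)), G (e ⟨p, ⟨k, v⟩⟩) = 8 * √(2 * N) / p.1 := by
      intro k hk
      have hk0 : k ≠ 0 := by have := (Finset.mem_Icc.mp hk).1; omega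
      have hkR : (k:ℝ) ≠ 0 := by exact_mod_cast hk0
      simp only [G, e, Finset.sum_const, Int.card_box hk0, nsmul_eq_mul]
      push_cast
      field_simp
    rw [Finset.sum_congr rfl this, Finset.sum_const, Nat.card_Icc, nsmul_eq_mul, hNe]
    have hfl : ((⌊2 * √(N:ℝ) / p.1⌋₊ + 1 - 1 : ℕ) : ℝ) ≤ 2 * √(N:ℝ) / p.1 := by
      rw [Nat.add_sub_cancel]; exact Nat.floor_le (by positivity)
    calc _ ≤ 2 * √(N:ℝ) / p.1 * (8 * √(2 * N) / p.1) := by gcongr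
      _ = _ := by
        rw [Real.sqrt_mul (by norm_num)]
        have := Real.mul_self_sqrt hNR.le
        field_simp
        linear_combination 16 * this
  refine (Finset.sum_le_sum step3).trans ?_
  rw [← Finset.mul_sum, sum_div_R hN]

lemma sum_log_im {N : ℕ} (hN : 0 < N) {τ : ℍ} (h : τ ∈ 𝒟) (hy : τ.im ≤ 1)
    (s : ℕ × ℕ → SL(2, ℤ)) (hs : ∀ p ∈ R N, s p • pt N p τ ∈ 𝒟) :
    ∑ p ∈ R N, Real.log (s p • pt N p τ).im ≤ 6.94 * (R N).card := by
  have h1 := sum_sqrt_im hN h hy s hs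
  have hl : Real.log 32 ≤ 3.466 := by
    have : Real.log 32 = 5 * Real.log 2 := by
      rw [show (32:ℝ) = 2 ^ 5 by norm_num, Real.log_pow]; norm_num
    have := Real.log_two_lt_d9
    linarith
  have hb : ∀ p ∈ R N, Real.log (s p • pt N p τ).im ≤ √(s p • pt N p τ).im / 16 + 4.932 := by
    intro p _
    have hpos : 0 < (s p • pt N p τ).im := (s p • pt N p τ).im_pos
    have hq := Real.sqrt_pos.mpr hpos
    have e1 : Real.log (s p • pt N p τ).im = 2 * Real.log √(s p • pt N p τ).im := by
      rw [Real.log_sqrt hpos.le]; ring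
    have e2 := Real.log_le_sub_one_of_pos (show 0 < √(s p • pt N p τ).im / 32 by positivity)
    rw [Real.log_div hq.ne' (by norm_num)] at e2
    rw [e1]; linarith
  refine (Finset.sum_le_sum hb).trans ?_
  rw [Finset.sum_add_distrib, ← Finset.sum_div, Finset.sum_const, nsmul_eq_mul]
  have h2 : √2 ≤ 1.5 := by
    rw [Real.sqrt_le_left (by norm_num)]; norm_num
  have : (0:ℝ) ≤ (R N).card := by positivity
  nlinarith

end MP

namespace MP
open UpperHalfPlane MatrixGroups Filter Polynomial
open scoped Real ModularForm Topology Modular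

lemma disc_le {τ : ℍ} (h : ‖qq τ‖ ≤ 1 / 100) : ‖ModularForm.discriminant τ‖ ≤ 1.34 * ‖qq τ‖ := by
  have h0 := norm_nonneg (qq τ)
  have h1 := (EP_bound h).2
  have h2 : ‖1 - qq τ‖ ≤ Real.exp ‖qq τ‖ := by
    have : ‖1 - qq τ‖ ≤ 1 + ‖qq τ‖ := by simpa using norm_sub_le (1 : ℂ) (qq τ)
    linarith [Real.add_one_le_exp ‖qq τ‖]
  have h3 : ‖EP (qq τ)‖ ≤ Real.exp (1 / 4) := by
    calc ‖EP (qq τ)‖ ≤ Real.exp ‖qq τ‖ ^ 24 * Real.exp (48 * ‖qq τ‖ ^ 2) := by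
          refine h1.trans ?_; gcongr
      _ = Real.exp (24 * ‖qq τ‖ + 48 * ‖qq τ‖ ^ 2) := by
          rw [← Real.exp_nat_mul, ← Real.exp_add]; norm_num
      _ ≤ _ := by
          rw [Real.exp_le_exp]; nlinarith
  have h4 : Real.exp (1 / 4) ≤ 1.34 := by
    have := Real.add_one_le_exp (-(1 / 4) : ℝ)
    rw [Real.exp_neg] at this
    have hp := Real.exp_pos (1 / 4)
    have h5 : (3 / 4 : ℝ) ≤ (Real.exp (1 / 4))⁻¹ := by linarith
    have := mul_le_mul_of_nonneg_right h5 hp.le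
    rw [inv_mul_cancel₀ hp.ne'] at this
    linarith
  rw [disc_eq, norm_mul, mul_comm]
  gcongr
  exact h3.trans h4

lemma norm_qq_fd' {τ : ℍ} (h : τ ∈ 𝒟) : ‖qq τ‖ ≤ 0.00434 := (norm_qq_fd h).trans r0_bounds.2

lemma ff_fd {τ : ℍ} (h : τ ∈ 𝒟) : ff τ ≤ 10 * τ.im ^ 6 := by
  have h1 := norm_qq_fd' h
  have h2 := disc_le (τ := τ) (by linarith)
  have h3 := E4_fd h
  have h4 : ‖ModularForm.E₄ τ‖ ≤ 2.1 := by
    have a := norm_add_le (ModularForm.E₄ τ - (1 + 240 * qq τ)) (1 + 240 * qq τ)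
    have b := norm_add_le (1 : ℂ) (240 * qq τ)
    rw [sub_add_cancel] at a
    simp at b
    linarith
  rw [ff]
  have := τ.im_pos
  gcongr
  apply max_le
  · calc ‖ModularForm.E₄ τ‖ ^ 3 ≤ 2.1 ^ 3 := by gcongr
      _ ≤ 10 := by norm_num
  · linarith

lemma im_le_one {τ : ℍ} (h : τ ∈ 𝒟) (hj : ‖jH τ‖ = 1) : τ.im ≤ 1 := by
  by_contra! hc
  have hr : ‖qq τ‖ ≤ 0.0026 := by
    rw [norm_qq]
    have hp := Real.pi_gt_three
    have h1 : Real.exp (-2 * π * τ.im) ≤ Real.exp (-6) := by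
      rw [Real.exp_le_exp]; nlinarith
    refine h1.trans ?_
    have : Real.exp (-6) = Real.exp (-1) ^ 6 := by
      rw [← Real.exp_nat_mul]; norm_num
    rw [this]
    have h2 := Real.exp_neg_one_lt_d9
    calc Real.exp (-1) ^ 6 ≤ 0.368 ^ 6 := by gcongr; linarith
      _ ≤ _ := by norm_num
  have h2 := disc_le (τ := τ) (by linarith)
  have h3 := E4_fd h
  have h4 : 0.33 ≤ ‖ModularForm.E₄ τ‖ := by
    have a := norm_sub_le (ModularForm.E₄ τ - (1 + 240 * qq τ)) (ModularForm.E₄ τ)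
    have b := norm_sub_le (1 + 240 * qq τ) (240 * qq τ)
    have e : ModularForm.E₄ τ - (1 + 240 * qq τ) - ModularForm.E₄ τ = -(1 + 240 * qq τ) := by ring
    rw [e, norm_neg] at a
    simp at b
    linarith
  have h5 : (0.33 : ℝ) ^ 3 ≤ ‖ModularForm.E₄ τ‖ ^ 3 := by gcongr
  have hd := norm_pos_iff.mpr (ModularForm.discriminant_ne_zero τ)
  rw [jH, norm_div, norm_pow, div_eq_one_iff_eq hd.ne'] at hj
  norm_num at h5
  linarith

lemma gg_fd {τ : ℍ} (h : τ ∈ 𝒟) (hy : τ.im ≤ 1) : -Real.log (gg τ) ≤ 7.4 := by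
  have h1 := norm_qq_fd' h
  have h0 := norm_nonneg (qq τ)
  have h2 := (abs_le.mp (log_gg_bound (τ := τ) (by linarith))).1
  have h3 := (abs_le.mp (abs_log_one_sub (w := qq τ) (by linarith))).1
  have h4 := im_fd h
  have s3 := sqrt3_bounds.1
  have hp := Real.pi_lt_d6
  have hp0 := Real.pi_pos
  have h5 : -Real.log τ.im ≤ 0.155 := by
    have := Real.one_sub_inv_le_log_of_pos τ.im_pos
    have h6 : τ.im⁻¹ ≤ (0.866 : ℝ)⁻¹ := by
      apply inv_anti₀ (by norm_num); linarith
    norm_num at h6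
    linarith
  have h7 : 2 * π * τ.im ≤ 6.2832 := by nlinarith [τ.im_pos]
  have h8 : ‖qq τ‖ ^ 2 ≤ 0.00434 ^ 2 := by gcongr
  norm_num at h8
  linarith

lemma log_ten : Real.log 10 ≤ 2.34 := by
  have h2 := Real.log_two_lt_d9
  have h : Real.log 10 = 3 * Real.log 2 + Real.log (5/4) := by
    rw [show (10:ℝ) = 2 ^ 3 * (5/4) by norm_num, Real.log_mul (by norm_num) (by norm_num),
      Real.log_pow]; norm_num
  have h3 : Real.log (5/4) ≤ 1/4 := by
    have := Real.log_le_sub_one_of_pos (show (0:ℝ) < 5/4 by norm_num); linarith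
  rw [h]; linarith

lemma mahler_upper {N : ℕ} (hN : 0 < N) {P : MvPolynomial (Fin 2) ℤ} (hP : IsModularPolynomial N P)
    {y : ℂ} (hy : ‖y‖ = 1) : Real.log (py P y).mahlerMeasure ≤
      6 * dedekindPsi N * (Real.log N - 2 * lambdaN N) + 51.5 * dedekindPsi N := by
  obtain ⟨τ₀, hτ₀⟩ := jH_surj hN hP y
  obtain ⟨σ, hσ⟩ := ModularGroup.exists_smul_mem_fd τ₀
  set τ := σ • τ₀ with hτ
  have hj : jH τ = y := by rw [hτ, jH_smul, hτ₀]
  have him := im_le_one hσ (by rw [hj, hy])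
  have hg := gg_fd hσ him
  choose s hs using fun p => ModularGroup.exists_smul_mem_fd (pt N p τ)
  have hsum := sum_log_im hN hσ him s (fun p _ => hs p)
  have hff : ∑ p ∈ R N, Real.log (ff (pt N p τ)) ≤
      ∑ p ∈ R N, (2.34 + 6 * Real.log (s p • pt N p τ).im) := by
    apply Finset.sum_le_sum
    intro p _
    rw [← ff_smul (s p)]
    have hpos : 0 < (s p • pt N p τ).im := (s p • pt N p τ).im_pos
    have h1 := Real.log_le_log (ff_pos _) (ff_fd (hs p))
    rw [Real.log_mul (by norm_num) (by positivity), Real.log_pow] at h1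
    push_cast at h1
    linarith [log_ten]
  rw [Finset.sum_add_distrib, Finset.sum_const, nsmul_eq_mul, ← Finset.mul_sum] at hff
  rw [← hj, mahler_log hN hP τ]
  rw [card_R hN] at hsum hff
  have : (0:ℝ) ≤ dedekindPsi N := by positivity
  nlinarith

lemma coeff_py_upper {N : ℕ} (hN : 0 < N) {P : MvPolynomial (Fin 2) ℤ} (hP : IsModularPolynomial N P)
    {y : ℂ} (hy : ‖y‖ = 1) (i : ℕ) : ‖(py P y).coeff i‖ ≤
      Real.exp (6 * (dedekindPsi N : ℝ) * (Real.log N - 2 * lambdaN N + 9.5387)) := by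
  have h1 := norm_coeff_le_choose_mul_mahlerMeasure i (py P y)
  have h2 := mahler_upper hN hP hy
  have hpos : 0 < (py P y).mahlerMeasure := mahlerMeasure_pos_of_ne_zero (py_monic hP y).ne_zero
  have h3 : (((py P y).natDegree.choose i : ℕ) : ℝ) ≤ Real.exp (Real.log 2 * dedekindPsi N) := by
    rw [py_natDegree hN hP, mul_comm, Real.exp_nat_mul, Real.exp_log (by norm_num)]
    exact_mod_cast Nat.choose_le_two_pow _ _
  have h4 : (py P y).mahlerMeasure ≤ Real.exp (6 * dedekindPsi N * (Real.log N - 2 * lambdaN N) + 51.5 * dedekindPsi N) := by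
    rw [← Real.log_le_iff_le_exp hpos]; exact h2
  refine h1.trans ((mul_le_mul h3 h4 hpos.le (Real.exp_pos _).le).trans ?_)
  rw [← Real.exp_add, Real.exp_le_exp]
  have := Real.log_two_lt_d9
  have : (0:ℝ) ≤ dedekindPsi N := by positivity
  nlinarith

lemma coeff_le_of_circle (p : ℂ[X]) {B : ℝ} (hB : 0 ≤ B) (h : ∀ y : ℂ, ‖y‖ = 1 → ‖p.eval y‖ ≤ B)
    (k : ℕ) : ‖p.coeff k‖ ≤ B := by
  apply le_of_sq_le_sq _ hB
  by_cases hk : k ∈ p.support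
  swap
  · rw [notMem_support_iff] at hk
    rw [hk]; simp; positivity
  calc ‖p.coeff k‖ ^ 2 ≤ ∑ i ∈ p.support, ‖p.coeff i‖ ^ 2 :=
        Finset.single_le_sum (f := fun i => ‖p.coeff i‖ ^ 2) (fun i _ => by positivity) hk
    _ = Real.circleAverage (fun θ ↦ ‖p.eval θ‖ ^ 2) 0 1 := sum_sq_norm_coeff_eq_circleAverage p
    _ ≤ B ^ 2 := by
      apply Real.circleAverage_mono_on_of_le_circle
      · apply ContinuousOn.circleIntegrable'
        fun_prop
      · intro x hx
        have hx1 : ‖x‖ = 1 := by simpa using hx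
        have := h x hx1
        gcongr

lemma height_upper {N : ℕ} (hN : 0 < N) {P : MvPolynomial (Fin 2) ℤ} (hP : IsModularPolynomial N P) :
    polyHeight P ≤ 6 * (dedekindPsi N : ℝ) * (Real.log N - 2 * lambdaN N + 9.5387) := by
  change Real.log (HH P : ℝ) ≤ _
  have h1 : (0:ℝ) < HH P := by exact_mod_cast one_le_HH hP
  rw [Real.log_le_iff_le_exp h1]
  set B := Real.exp (6 * (dedekindPsi N : ℝ) * (Real.log N - 2 * lambdaN N + 9.5387)) with hB
  have hB0 : 0 ≤ B := (Real.exp_pos _).le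
  have hc : ∀ m : Fin 2 →₀ ℕ, (((MvPolynomial.coeff m P).natAbs : ℕ) : ℝ) ≤ B := by
    intro m
    have hm : m = (Finsupp.single 0 (m 1) : Fin 1 →₀ ℕ).cons (m 0) := by
      ext j; fin_cases j
      · simp
      · change m 1 = (Finsupp.cons (m 0) (Finsupp.single 0 (m 1) : Fin 1 →₀ ℕ)) (Fin.succ 0)
        rw [Finsupp.cons_succ]; simp
    have := coeff_le_of_circle (toPoly ((WW P).coeff (m 0))) hB0
      (fun y hy => by rw [← py_coeff]; exact coeff_py_upper hN hP hy _) (m 1)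
    rw [toPoly_coeff, ← hm, Complex.norm_intCast] at this
    rw [Nat.cast_natAbs]; push_cast; exact this
  have h2 : HH P ≤ ⌊B⌋₊ := Finset.sup_le fun m _ => Nat.le_floor (hc m)
  exact (Nat.cast_le.mpr h2).trans (Nat.floor_le hB0)

end MP

/-- Degrees and explicit height bounds for the modular polynomial `Φ_N`, `N ≥ 2`. -/
theorem modularPolynomial_degree_and_height (N : ℕ) (hN : 2 ≤ N)
    (P : MvPolynomial (Fin 2) ℤ) (hP : IsModularPolynomial N P) :
    MvPolynomial.degreeOf 0 P = dedekindPsi N ∧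
    MvPolynomial.degreeOf 1 P = dedekindPsi N ∧
    6 * (dedekindPsi N : ℝ) * (Real.log N - 2 * lambdaN N - 0.0351) ≤ polyHeight P ∧
    polyHeight P ≤ 6 * (dedekindPsi N : ℝ) * (Real.log N - 2 * lambdaN N + 9.5387) := by
  have hN0 : 0 < N := by lia
  obtain ⟨h1, h2⟩ := MP.degrees hN0 hP
  exact ⟨h1, h2, MP.height_lower hN hP, MP.height_upper hN0 hP⟩
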